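/- arXiv:math/9810157 — 9 statements merged into one kernel-verified Lean document; each statement's English description precedes it below -/
import Mathlib

section
/- Let f : U → Im ℍ be a conformal immersion with unit normal n := f_x·f_y/(|f_x|·|f_y|), and let τ₁, τ₂ : U → Im ℍ be smooth. Then at every point of U the following are equivalent: (i) f_x·τ₂ = f_y·τ₁ (i.e. df ∧ τ = 0 for the 1-form τ = τ₁dx + τ₂dy); (ii) τ₂ = −n·τ₁; (iii) f_x·τ₁ commutes with n, and for all a, b ∈ ℝ one has (a·f_x + b·f_y)·(a·τ₁ + b·τ₂) = (a + b·n)²·(f_x·τ₁). (This says df·τ defines a quadratic differential with values in the commutative subalgebra span{1,n} iff df ∧ τ = 0.) -/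
/-!
At a point of `U` write `X = f_x`, `Y = f_y`. Both are imaginary (differentiate `re f = 0`), and
conformality makes them anticommute with `X² = Y² = -|X|²`. Hence `n = XY/|X|²` satisfies
`n X = Y = -X n`, `n² = -1` and `n̄ = -n` (`normal_relations`), and everything else is algebra in a
division ring (`wedge_zero_tfae`):

* `X τ₂ = Y τ₁ = n X τ₁ = -X n τ₁` is equivalent to `τ₂ = -n τ₁` by cancelling `X`;
* if `τ₂ = -n τ₁`, then `n τ₁` is imaginary, so `n` anticommutes with `τ₁` as it does with `X`, and
  thus commutes with `X τ₁`; the quadratic identity reads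
  `(a + b n) X (a - b n) τ₁ = (a + b n)² X τ₁`;
* conversely the case `a = 0`, `b = 1` of the quadratic identity is `n X τ₂ = n² X τ₁`, and
  cancelling `n` gives `X τ₂ = n X τ₁ = Y τ₁`.
-/

/- STATEMENT 1: For a conformal immersion f : U → Im ℍ with unit normal
n = f_x·f_y/(|f_x|·|f_y|) and smooth τ₁, τ₂ : U → Im ℍ, at every point of U the
following are equivalent:
(i)  f_x·τ₂ = f_y·τ₁  (df ∧ τ = 0);
(ii) τ₂ = −n·τ₁;
(iii) f_x·τ₁ commutes with n, and for all a, b ∈ ℝ,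
      (a·f_x + b·f_y)·(a·τ₁ + b·τ₂) = (a + b·n)²·(f_x·τ₁). -/

noncomputable section
open scoped ContDiff Quaternion

abbrev HQ : Type := Quaternion ℝ

noncomputable def pdx {E : Type} [NormedAddCommGroup E] [NormedSpace ℝ E]
    (f : ℝ × ℝ → E) (p : ℝ × ℝ) : E := fderiv ℝ f p (1, 0)

noncomputable def pdy {E : Type} [NormedAddCommGroup E] [NormedSpace ℝ E]
    (f : ℝ × ℝ → E) (p : ℝ × ℝ) : E := fderiv ℝ f p (0, 1)

/-- The unit normal of a conformal immersion. -/
noncomputable def unormal (f : ℝ × ℝ → HQ) (p : ℝ × ℝ) : HQ :=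
  (pdx f p * pdy f p) / ((‖pdx f p‖ * ‖pdy f p‖ : ℝ) : HQ)

theorem re_fderiv_eq_zero {U : Set (ℝ × ℝ)} (hU : IsOpen U) {f : ℝ × ℝ → HQ}
    (hf : ContDiffOn ℝ ∞ f U) (hfIm : ∀ p ∈ U, (f p).re = 0) {p : ℝ × ℝ} (hp : p ∈ U)
    (v : ℝ × ℝ) : (fderiv ℝ f p v).re = 0 := by
  have hd : DifferentiableAt ℝ f p :=
    (hf.contDiffAt (hU.mem_nhds hp)).differentiableAt (by simp)
  -- `re` as a continuous linear functional: the inner product with `1`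
  have h1 : HasFDerivAt (fun q => innerSL ℝ (1 : HQ) (f q))
      ((innerSL ℝ (1 : HQ)).comp (fderiv ℝ f p)) p :=
    (innerSL ℝ (1 : HQ)).hasFDerivAt.comp p hd.hasFDerivAt
  have h2 : HasFDerivAt (fun q => innerSL ℝ (1 : HQ) (f q)) (0 : ℝ × ℝ →L[ℝ] ℝ) p := by
    refine (hasFDerivAt_const (0 : ℝ) p).congr_of_eventuallyEq ?_
    filter_upwards [hU.mem_nhds hp] with q hq
    simp [Quaternion.inner_def, hfIm q hq]
  have h3 := congrArg (fun L : ℝ × ℝ →L[ℝ] ℝ => L v) (h1.unique h2)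
  simpa [Quaternion.inner_def] using h3

/-- Multiplication rules for the normal `XY/(|X||Y|)` of a conformal pair of imaginary
quaternions. -/
theorem normal_relations {X Y : HQ} (hX : X.re = 0) (hY : Y.re = 0) (hn : ‖X‖ = ‖Y‖)
    (hpos : 0 < ‖X‖) (horth : (X * star Y).re = 0) {n : HQ}
    (hdef : n = (X * Y) / ((‖X‖ * ‖Y‖ : ℝ) : HQ)) :
    n * X = Y ∧ X * n = -Y ∧ n * n = -1 ∧ star n = -n := by
  have sX : star X = -X := Quaternion.star_eq_neg.2 hX
  have sY : star Y = -Y := Quaternion.star_eq_neg.2 hY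
  have hXX : X * X = -((‖X‖ * ‖X‖ : ℝ) : HQ) := by
    have h := Quaternion.self_mul_star X
    rw [sX, Quaternion.normSq_eq_norm_mul_self, mul_neg] at h
    rw [← h, neg_neg]
  have hYY : Y * Y = -((‖X‖ * ‖X‖ : ℝ) : HQ) := by
    have h := Quaternion.self_mul_star Y
    rw [sY, Quaternion.normSq_eq_norm_mul_self, mul_neg, ← hn] at h
    rw [← h, neg_neg]
  -- orthogonal imaginary quaternions anticommute, since `XY` is imaginary too
  have hYX : Y * X = -(X * Y) := by
    have h0 : (X * Y).re = 0 := by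
      rwa [sY, mul_neg, Quaternion.re_neg, neg_eq_zero] at horth
    have h := Quaternion.star_eq_neg.2 h0
    rwa [star_mul, sX, sY, neg_mul_neg] at h
  have hX0 : X ≠ 0 := norm_pos_iff.1 hpos
  have hr : ‖X‖ * ‖X‖ ≠ 0 := (mul_pos hpos hpos).ne'
  rw [← hn] at hdef
  have hdef' : n = (‖X‖ * ‖X‖)⁻¹ • (X * Y) := by
    rw [hdef, div_eq_mul_inv, ← Quaternion.coe_inv, Quaternion.mul_coe_eq_smul]
  have cancel : ∀ Z : HQ, (‖X‖ * ‖X‖)⁻¹ • (((‖X‖ * ‖X‖ : ℝ) : HQ) * Z) = Z := by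
    intro Z
    rw [Quaternion.coe_mul_eq_smul, smul_smul, inv_mul_cancel₀ hr, one_smul]
  have hXn : X * n = -Y := by
    rw [hdef', mul_smul_comm, ← mul_assoc, hXX, neg_mul, smul_neg, cancel]
  have hnX : n * X = Y := by
    rw [hdef', smul_mul_assoc, mul_assoc, hYX, mul_neg, ← mul_assoc, hXX, neg_mul, neg_neg, cancel]
  have hnY : n * Y = -X := by
    rw [hdef', smul_mul_assoc, mul_assoc, hYY, mul_neg, ← Quaternion.coe_commutes, smul_neg, cancel]
  refine ⟨hnX, hXn, ?_, ?_⟩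
  · apply mul_right_cancel₀ hX0
    rw [mul_assoc, hnX, hnY, neg_one_mul]
  · rw [hdef', Quaternion.star_smul, star_mul, sX, sY, neg_mul_neg, hYX, smul_neg]

/-- The pointwise equivalences, for imaginary `t = τ₁`, `s = τ₂`; the normal enters only through its
multiplication rules. -/
theorem wedge_zero_tfae {X Y n t s : HQ} (hX0 : X ≠ 0) (hnX : n * X = Y) (hXn : X * n = -Y)
    (hnn : n * n = -1) (hns : star n = -n) (ht : t.re = 0) (hs : s.re = 0) :
    (X * s = Y * t ↔ s = -(n * t)) ∧
    (X * s = Y * t ↔ ((X * t) * n = n * (X * t) ∧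
      ∀ a b : ℝ, (a • X + b • Y) * (a • t + b • s) =
        ((a : HQ) + (b : HQ) * n) ^ 2 * (X * t))) := by
  have h12 : X * s = Y * t ↔ s = -(n * t) := by
    have h : Y * t = X * (-(n * t)) := by rw [mul_neg, ← mul_assoc, hXn, neg_mul, neg_neg]
    rw [h]
    exact mul_right_inj' hX0
  refine ⟨h12, fun h => ?_, fun h => ?_⟩
  · have h2 := h12.1 h
    -- `s = -n t` is imaginary, so `n` and `t` anticommute
    have htn : t * n = -(n * t) := by
      have h3 := Quaternion.star_eq_neg.2 hs
      rw [h2, star_neg, star_mul, hns, Quaternion.star_eq_neg.2 ht, neg_mul_neg, neg_neg] at h3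
      rw [← neg_neg (t * n), h3]
    refine ⟨?_, fun a b => ?_⟩
    · rw [mul_assoc, htn, mul_neg, ← mul_assoc, hXn, ← mul_assoc, hnX, neg_mul, neg_neg]
    · have hYs : Y * s = -(X * t) := by
        rw [← hnX, mul_assoc, h, ← hnX, mul_assoc n X t, ← mul_assoc n n, hnn, neg_one_mul]
      have hYt : n * (X * t) = Y * t := by rw [← mul_assoc, hnX]
      have hsq : ((a : HQ) + (b : HQ) * n) ^ 2 =
          (a * a - b * b) • (1 : HQ) + (2 * (a * b)) • n := by
        have ha : (a : HQ) = a • (1 : HQ) := by rw [← Quaternion.coe_mul_eq_smul, mul_one]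
        rw [ha, Quaternion.coe_mul_eq_smul, sq]
        simp only [add_mul, mul_add, smul_mul_assoc, mul_smul_comm, one_mul, mul_one, hnn]
        module
      rw [hsq]
      simp only [add_mul, mul_add, smul_mul_assoc, mul_smul_comm, one_mul, hYt, hYs, h]
      module
  · have h1 := h.2 0 1
    simp only [zero_smul, one_smul, zero_add, Quaternion.coe_zero, Quaternion.coe_one, one_mul,
      sq, hnn, neg_one_mul] at h1
    have hn0 : n ≠ 0 := by
      rintro rfl
      simp at hnn
    apply mul_left_cancel₀ hn0
    rw [← mul_assoc, hnX, h1, ← hnX, mul_assoc n X t, ← mul_assoc n n, hnn, neg_one_mul]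

theorem quadratic_differential_iff_wedge_zero
    (U : Set (ℝ × ℝ)) (hU : IsOpen U) (f τ₁ τ₂ : ℝ × ℝ → HQ)
    (hf : ContDiffOn ℝ ∞ f U) (hfIm : ∀ p ∈ U, (f p).re = 0)
    (hconf : ∀ p ∈ U, ‖pdx f p‖ = ‖pdy f p‖ ∧ 0 < ‖pdx f p‖ ∧
      (pdx f p * star (pdy f p)).re = 0)
    (hτ₁ : ContDiffOn ℝ ∞ τ₁ U) (hτ₂ : ContDiffOn ℝ ∞ τ₂ U)
    (hτ₁Im : ∀ p ∈ U, (τ₁ p).re = 0) (hτ₂Im : ∀ p ∈ U, (τ₂ p).re = 0) :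
    ∀ p ∈ U,
      ((pdx f p * τ₂ p = pdy f p * τ₁ p) ↔ (τ₂ p = -(unormal f p * τ₁ p))) ∧
      ((pdx f p * τ₂ p = pdy f p * τ₁ p) ↔
        ((pdx f p * τ₁ p) * unormal f p = unormal f p * (pdx f p * τ₁ p) ∧
          ∀ a b : ℝ,
            (a • pdx f p + b • pdy f p) * (a • τ₁ p + b • τ₂ p) =
              ((a : HQ) + (b : HQ) * unormal f p) ^ 2 * (pdx f p * τ₁ p))) := by
  intro p hp
  obtain ⟨hn, hpos, horth⟩ := hconf p hp
  obtain ⟨hnX, hXn, hnn, hns⟩ := normal_relations (n := unormal f p)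
    (re_fderiv_eq_zero hU hf hfIm hp (1, 0)) (re_fderiv_eq_zero hU hf hfIm hp (0, 1))
    hn hpos horth rfl
  exact wedge_zero_tfae (norm_pos_iff.1 hpos) hnX hXn hnn hns (hτ₁Im p hp) (hτ₂Im p hp)

end
end

section
/- (Darboux condition produces a Christoffel 1-form.) Let f, f̂ : U → Im ℍ be smooth with f(p) ≠ f̂(p) for all p ∈ U, and suppose f_x·(f − f̂)⁻¹·f̂_y = f_y·(f − f̂)⁻¹·f̂_x on U (the Darboux condition df ∧ (f − f̂)⁻¹ df̂ = 0). Set ω₁ := (f̂ − f)⁻¹·f̂_x·(f̂ − f)⁻¹ and ω₂ := (f̂ − f)⁻¹·f̂_y·(f̂ − f)⁻¹. Then: (a) ω₁, ω₂ take values in Im ℍ; (b) the 1-form ω₁dx + ω₂dy is closed: ∂_y ω₁ = ∂_x ω₂ on U; (c) f_x·ω₂ = f_y·ω₁ on U. Hence any local primitive of ω₁dx + ω₂dy forms a Christoffel pair with f (it is a Christoffel transform of f up to a real scale). -/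
/-!
Write `n = f̂ - f` and `g = n⁻¹`. Imaginary quaternions are those with `star q = -q`, so products
`a * b * c` of imaginary quaternions satisfy `star (a * b * c) = -(c * b * a)`; since inverses and
partial derivatives of imaginary-valued maps are imaginary, this gives (a). Claim (c) is the Darboux
condition multiplied on the right by `g`.

For (b), the product rule and the symmetry of second derivatives show that `∂_y ω₁ - ∂_x ω₂` is
`g * R * g`, where `R` is the sum of the Darboux expression
`D = f_y * g * f̂_x - f_x * g * f̂_y` and of its reversal `f̂_x * g * f_y - f̂_y * g * f_x`
(the terms involving only `f̂` cancel). The reversal is `-star D`, so both vanish.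
-/

/- STATEMENT 4 (Darboux condition produces a Christoffel 1-form): Let f, f̂ : U → Im ℍ
with f ≠ f̂ on U satisfy the Darboux condition
f_x·(f − f̂)⁻¹·f̂_y = f_y·(f − f̂)⁻¹·f̂_x on U. Set
ω₁ := (f̂ − f)⁻¹·f̂_x·(f̂ − f)⁻¹ and ω₂ := (f̂ − f)⁻¹·f̂_y·(f̂ − f)⁻¹. Then:
(a) ω₁, ω₂ take values in Im ℍ; (b) ∂_y ω₁ = ∂_x ω₂ on U; (c) f_x·ω₂ = f_y·ω₁ on U;
hence any local primitive of ω₁dx + ω₂dy forms a Christoffel pair with f. -/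

noncomputable section
open scoped ContDiff Quaternion

/-- Directional derivative of the sandwich `n⁻¹ * a * n⁻¹`. -/
lemma fderiv_inv_mul_mul_inv {n a : ℝ × ℝ → HQ} {p : ℝ × ℝ}
    (hn : DifferentiableAt ℝ n p) (ha : DifferentiableAt ℝ a p) (h0 : n p ≠ 0) (v : ℝ × ℝ) :
    fderiv ℝ (fun q => (n q)⁻¹ * a q * (n q)⁻¹) p v =
      (n p)⁻¹ * fderiv ℝ a p v * (n p)⁻¹
        - (n p)⁻¹ * (fderiv ℝ n p v * (n p)⁻¹ * a p + a p * (n p)⁻¹ * fderiv ℝ n p v)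
          * (n p)⁻¹ := by
  have hi : HasFDerivAt (fun q => (n q)⁻¹) _ p :=
    (hasFDerivAt_inv' (𝕜 := ℝ) h0).comp p hn.hasFDerivAt
  have h : HasFDerivAt (fun q => (n q)⁻¹ * a q * (n q)⁻¹) _ p :=
    (hi.mul' ha.hasFDerivAt).mul' hi
  rw [h.fderiv]
  simp
  noncomm_ring

lemma fderiv_re_eq_zero {U : Set (ℝ × ℝ)} (hU : IsOpen U) {f : ℝ × ℝ → HQ}
    (hIm : ∀ p ∈ U, (f p).re = 0) {p : ℝ × ℝ} (hp : p ∈ U) (hf : DifferentiableAt ℝ f p)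
    (v : ℝ × ℝ) : (fderiv ℝ f p v).re = 0 := by
  let L : HQ →L[ℝ] ℝ := ⟨QuaternionAlgebra.reₗ _ _ _, Quaternion.continuous_re⟩
  have h1 : HasFDerivAt (fun q => L (f q)) (L.comp (fderiv ℝ f p)) p :=
    L.hasFDerivAt.comp p hf.hasFDerivAt
  have h2 : HasFDerivAt (fun q => L (f q)) (0 : ℝ × ℝ →L[ℝ] ℝ) p := by
    refine (hasFDerivAt_const (0 : ℝ) p).congr_of_eventuallyEq ?_
    filter_upwards [hU.mem_nhds hp] with q hq using hIm q hq
  exact congrArg (fun T : ℝ × ℝ →L[ℝ] ℝ => T v) (h1.unique h2)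

lemma star_inv_of_re_eq_zero {q : HQ} (hq : q.re = 0) : star q⁻¹ = -q⁻¹ := by
  rw [star_inv₀, Quaternion.star_eq_neg.mpr hq, inv_neg]

lemma re_inv_mul_mul_inv {n a : HQ} (hn : n.re = 0) (ha : a.re = 0) :
    (n⁻¹ * a * n⁻¹).re = 0 := by
  rw [← Quaternion.star_eq_neg]
  simp only [star_mul, star_inv_of_re_eq_zero hn, Quaternion.star_eq_neg.mpr ha]
  noncomm_ring

/-- Conjugating an equality between products of three imaginary quaternions reverses both sides. -/
lemma reverse_mul_eq {a b c d g : HQ} (ha : a.re = 0) (hb : b.re = 0) (hc : c.re = 0)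
    (hd : d.re = 0) (hg : star g = -g) (h : a * g * b = c * g * d) :
    b * g * a = d * g * c := by
  have h' := congrArg star h
  simp only [star_mul, hg, Quaternion.star_eq_neg.mpr ha, Quaternion.star_eq_neg.mpr hb,
    Quaternion.star_eq_neg.mpr hc, Quaternion.star_eq_neg.mpr hd] at h'
  simpa [mul_assoc] using h'

theorem darboux_gives_christoffel_one_form
    (U : Set (ℝ × ℝ)) (hU : IsOpen U) (f fh : ℝ × ℝ → HQ)
    (hf : ContDiffOn ℝ ∞ f U) (hfh : ContDiffOn ℝ ∞ fh U)
    (hfIm : ∀ p ∈ U, (f p).re = 0) (hfhIm : ∀ p ∈ U, (fh p).re = 0)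
    (hne : ∀ p ∈ U, f p ≠ fh p)
    (hD : ∀ p ∈ U, pdx f p * (f p - fh p)⁻¹ * pdy fh p =
                   pdy f p * (f p - fh p)⁻¹ * pdx fh p) :
    -- (a)
    (∀ p ∈ U, ((fh p - f p)⁻¹ * pdx fh p * (fh p - f p)⁻¹).re = 0 ∧
              ((fh p - f p)⁻¹ * pdy fh p * (fh p - f p)⁻¹).re = 0) ∧
    -- (b)
    (∀ p ∈ U, pdy (fun q => (fh q - f q)⁻¹ * pdx fh q * (fh q - f q)⁻¹) p =
              pdx (fun q => (fh q - f q)⁻¹ * pdy fh q * (fh q - f q)⁻¹) p) ∧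
    -- (c)
    (∀ p ∈ U, pdx f p * ((fh p - f p)⁻¹ * pdy fh p * (fh p - f p)⁻¹) =
              pdy f p * ((fh p - f p)⁻¹ * pdx fh p * (fh p - f p)⁻¹)) ∧
    -- hence: any local primitive of ω₁dx + ω₂dy is a Christoffel partner of f
    (∀ (fs : ℝ × ℝ → HQ) (V : Set (ℝ × ℝ)), IsOpen V → V ⊆ U →
      (∀ p ∈ V, pdx fs p = (fh p - f p)⁻¹ * pdx fh p * (fh p - f p)⁻¹ ∧
                pdy fs p = (fh p - f p)⁻¹ * pdy fh p * (fh p - f p)⁻¹) →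
      ∀ p ∈ V, pdx f p * pdy fs p = pdy f p * pdx fs p) := by
  have hdf : ∀ p ∈ U, DifferentiableAt ℝ f p := fun p hp =>
    (hf.contDiffAt (hU.mem_nhds hp)).differentiableAt (by simp)
  have hdfh : ∀ p ∈ U, DifferentiableAt ℝ fh p := fun p hp =>
    (hfh.contDiffAt (hU.mem_nhds hp)).differentiableAt (by simp)
  have hn0 : ∀ p ∈ U, fh p - f p ≠ 0 := fun p hp => sub_ne_zero.mpr (hne p hp).symm
  have hnIm : ∀ p ∈ U, (fh p - f p).re = 0 := fun p hp => by
    simp [hfIm p hp, hfhIm p hp]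
  -- The Darboux condition is homogeneous in `f - f̂`, so the sign of the difference is immaterial.
  have hD' : ∀ p ∈ U, pdx f p * (fh p - f p)⁻¹ * pdy fh p =
      pdy f p * (fh p - f p)⁻¹ * pdx fh p := fun p hp => by
    have h := hD p hp
    rw [← neg_sub (fh p) (f p), inv_neg] at h
    simpa using h
  have hc : ∀ p ∈ U, pdx f p * ((fh p - f p)⁻¹ * pdy fh p * (fh p - f p)⁻¹) =
      pdy f p * ((fh p - f p)⁻¹ * pdx fh p * (fh p - f p)⁻¹) := fun p hp => by
    simpa only [mul_assoc] using congrArg (· * (fh p - f p)⁻¹) (hD' p hp)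
  refine ⟨fun p hp => ⟨?_, ?_⟩, fun p hp => ?_, hc, fun fs V _ hVU hfs p hp => ?_⟩
  · exact re_inv_mul_mul_inv (hnIm p hp) (fderiv_re_eq_zero hU hfhIm hp (hdfh p hp) _)
  · exact re_inv_mul_mul_inv (hnIm p hp) (fderiv_re_eq_zero hU hfhIm hp (hdfh p hp) _)
  · have hcd : ContDiffAt ℝ ∞ fh p := hfh.contDiffAt (hU.mem_nhds hp)
    have hd2 : DifferentiableAt ℝ (fderiv ℝ fh) p :=
      (hcd.fderiv_right (m := 1) (by norm_cast)).differentiableAt (by simp)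
    have hpart : ∀ v w : ℝ × ℝ,
        fderiv ℝ (fun q => fderiv ℝ fh q v) p w = fderiv ℝ (fderiv ℝ fh) p w v := fun v w => by
      rw [fderiv_clm_apply hd2 (differentiableAt_const v)]
      simp
    have hsymm : fderiv ℝ (fun q => pdx fh q) p (0, 1) =
        fderiv ℝ (fun q => pdy fh q) p (1, 0) := by
      simp only [pdx, pdy, hpart]
      exact (hcd.isSymmSndFDerivAt (by simp; exact WithTop.coe_le_coe.mpr le_top)).eq _ _
    have hdx : DifferentiableAt ℝ (fun q => pdx fh q) p :=
      hd2.clm_apply (differentiableAt_const _)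
    have hdy : DifferentiableAt ℝ (fun q => pdy fh q) p :=
      hd2.clm_apply (differentiableAt_const _)
    have hdn : DifferentiableAt ℝ (fun q => fh q - f q) p := (hdfh p hp).sub (hdf p hp)
    have hsub : ∀ v, fderiv ℝ (fun q => fh q - f q) p v = fderiv ℝ fh p v - fderiv ℝ f p v :=
      fun v => by rw [fderiv_fun_sub (hdfh p hp) (hdf p hp)]; rfl
    have hrev := reverse_mul_eq (fderiv_re_eq_zero hU hfIm hp (hdf p hp) _)
      (fderiv_re_eq_zero hU hfhIm hp (hdfh p hp) _) (fderiv_re_eq_zero hU hfIm hp (hdf p hp) _)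
      (fderiv_re_eq_zero hU hfhIm hp (hdfh p hp) _) (star_inv_of_re_eq_zero (hnIm p hp)) (hD' p hp)
    have hfwd := hD' p hp
    change fderiv ℝ _ p (0, 1) = fderiv ℝ _ p (1, 0)
    rw [fderiv_inv_mul_mul_inv hdn hdx (hn0 p hp), fderiv_inv_mul_mul_inv hdn hdy (hn0 p hp),
      hsymm, hsub, hsub]
    congr 3
    simp only [pdx, pdy] at hfwd hrev ⊢
    simp only [sub_mul, mul_sub, hfwd, hrev]
    abel
  · rw [(hfs p hp).1, (hfs p hp).2]
    exact hc p (hVU hp)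

end
end

section
/- (Darboux's linear system yields the Riccati equation.) Let f, f★ : U → ℍ be smooth, λ ∈ ℝ, and let v₁, v₂ : U → ℍ be smooth with v₁(p) invertible for every p ∈ U, satisfying Darboux's linear system: ∂_x v₁ = −λ·f★_x·v₂, ∂_y v₁ = −λ·f★_y·v₂, ∂_x v₂ = −f_x·v₁, ∂_y v₂ = −f_y·v₁. Then g := v₂·v₁⁻¹ satisfies the Riccati equations ∂_x g = g·λ·f★_x·g − f_x and ∂_y g = g·λ·f★_y·g − f_y on U; in particular f̂ := f + v₂·v₁⁻¹ is a λ-Darboux transform of f. -/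
/-!
Along any direction `w`, the product and inverse rules in the noncommutative division algebra `ℍ`
give `∂(v₂ v₁⁻¹) = (∂v₂) v₁⁻¹ - v₂ v₁⁻¹ (∂v₁) v₁⁻¹` (`fderiv_mul_inv_apply`). Substituting
`∂v₂ = -(∂f) v₁` turns the first term into `-∂f`, and substituting `∂v₁ = -λ (∂f★) v₂` turns the
second into `g λ (∂f★) g` with `g = v₂ v₁⁻¹`. The Riccati equations are the cases of the two
coordinate directions.
-/

/- STATEMENT 5 (Darboux's linear system yields the Riccati equation): If v₁, v₂
solve Darboux's linear system ∂v₁ = −λ·df★·v₂, ∂v₂ = −df·v₁ with v₁ pointwise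
invertible, then g := v₂·v₁⁻¹ satisfies the Riccati equations
∂_x g = g·λ·f★_x·g − f_x and ∂_y g = g·λ·f★_y·g − f_y on U. -/

noncomputable section
open scoped ContDiff Quaternion

/-- Quotient rule for quaternion-valued maps, with the factors in their noncommutative order. -/
theorem fderiv_mul_inv_apply {v₁ v₂ : ℝ × ℝ → HQ} {p : ℝ × ℝ}
    (h₁ : DifferentiableAt ℝ v₁ p) (h₂ : DifferentiableAt ℝ v₂ p) (h0 : v₁ p ≠ 0) (w : ℝ × ℝ) :
    fderiv ℝ (fun q => v₂ q * (v₁ q)⁻¹) p w =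
      fderiv ℝ v₂ p w * (v₁ p)⁻¹ -
        v₂ p * (v₁ p)⁻¹ * fderiv ℝ v₁ p w * (v₁ p)⁻¹ := by
  have h := h₂.hasFDerivAt.mul' ((hasFDerivAt_inv' (𝕜 := ℝ) h0).comp p h₁.hasFDerivAt)
  have e := congrArg (fun L => L w) h.fderiv
  refine e.trans ?_
  simp [mul_assoc, sub_eq_add_neg, add_comm]

/-- The Riccati equation in an arbitrary direction `w`. -/
theorem riccati_of_linear_system_apply {v₁ v₂ : ℝ × ℝ → HQ} {p : ℝ × ℝ}
    (h₁ : DifferentiableAt ℝ v₁ p) (h₂ : DifferentiableAt ℝ v₂ p) (h0 : v₁ p ≠ 0) (w : ℝ × ℝ)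
    {a b : HQ} (e₁ : fderiv ℝ v₁ p w = -(a * v₂ p)) (e₂ : fderiv ℝ v₂ p w = -(b * v₁ p)) :
    fderiv ℝ (fun q => v₂ q * (v₁ q)⁻¹) p w =
      (v₂ p * (v₁ p)⁻¹) * a * (v₂ p * (v₁ p)⁻¹) - b := by
  rw [fderiv_mul_inv_apply h₁ h₂ h0, e₁, e₂, neg_mul, mul_assoc b, mul_inv_cancel₀ h0]
  noncomm_ring

theorem darboux_linear_system_yields_riccati
    (U : Set (ℝ × ℝ)) (hU : IsOpen U) (f fs v₁ v₂ : ℝ × ℝ → HQ) (l : ℝ)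
    (hf : ContDiffOn ℝ ∞ f U) (hfs : ContDiffOn ℝ ∞ fs U)
    (hv₁ : ContDiffOn ℝ ∞ v₁ U) (hv₂ : ContDiffOn ℝ ∞ v₂ U)
    (hinv : ∀ p ∈ U, v₁ p ≠ 0)
    (h1x : ∀ p ∈ U, pdx v₁ p = -((l : HQ) * pdx fs p * v₂ p))
    (h1y : ∀ p ∈ U, pdy v₁ p = -((l : HQ) * pdy fs p * v₂ p))
    (h2x : ∀ p ∈ U, pdx v₂ p = -(pdx f p * v₁ p))
    (h2y : ∀ p ∈ U, pdy v₂ p = -(pdy f p * v₁ p)) :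
    ∀ p ∈ U,
      pdx (fun q => v₂ q * (v₁ q)⁻¹) p =
        (v₂ p * (v₁ p)⁻¹) * ((l : HQ) * pdx fs p) * (v₂ p * (v₁ p)⁻¹) - pdx f p ∧
      pdy (fun q => v₂ q * (v₁ q)⁻¹) p =
        (v₂ p * (v₁ p)⁻¹) * ((l : HQ) * pdy fs p) * (v₂ p * (v₁ p)⁻¹) - pdy f p := by
  intro p hp
  have d₁ : DifferentiableAt ℝ v₁ p :=
    (hv₁.contDiffAt (hU.mem_nhds hp)).differentiableAt (by simp)
  have d₂ : DifferentiableAt ℝ v₂ p :=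
    (hv₂.contDiffAt (hU.mem_nhds hp)).differentiableAt (by simp)
  exact ⟨riccati_of_linear_system_apply d₁ d₂ (hinv p hp) (1, 0) (h1x p hp) (h2x p hp),
    riccati_of_linear_system_apply d₁ d₂ (hinv p hp) (0, 1) (h1y p hp) (h2y p hp)⟩

end
end

section
/- (Complete integrability of the Riccati equation.) Let f, f★ : U → Im ℍ be smooth with f_x·f★_y = f_y·f★_x on U (a Christoffel pair), let λ ∈ ℝ, p₀ ∈ U, and g₀ ∈ ℍ. Then there exist an open neighbourhood V ⊆ U of p₀ and a smooth map g : V → ℍ with g(p₀) = g₀ satisfying the Riccati equations ∂_x g = g·λ·f★_x·g − f_x and ∂_y g = g·λ·f★_y·g − f_y on V. -/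
/-!
The Riccati system is lifted to the two vector fields
`X = (∂_x, g (λ f★_x) g - f_x)` and `Y = (∂_y, g (λ f★_y) g - f_y)` on `U × ℍ`, whose joint integral
surfaces are the graphs of solutions. In `DX(Y) - DY(X)` the mixed second derivatives and the terms
cubic in `g` cancel, leaving `λ` times
`(f_x f★_y - f_y f★_x) g + g (f★_y f_x - f★_x f_y)`.
The first bracket vanishes by the Christoffel relation, and the second is the conjugate of the
first, because `f` and `f★` have imaginary values. So `X` and `Y` commute.

Existence then follows from the Frobenius theorem for two commuting fields
(`exists_map_of_commute`). An integral curve of `X` is transported by the local flow of `Y`.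
That the resulting surface is tangent to `X` is shown in `hasDerivAt_of_commute` by a Grönwall
estimate, which needs only Lipschitz dependence of the flow on its initial point. Smoothness
follows by bootstrapping the equation (`contDiffOn_of_hasFDerivAt`).
-/

/- STATEMENT 7 (Complete integrability of the Riccati equation): For a Christoffel
pair f, f★ : U → Im ℍ, λ ∈ ℝ, p₀ ∈ U and g₀ ∈ ℍ, there is a local smooth solution g
of the Riccati equations ∂g = g·(λ df★)·g − df near p₀ with g(p₀) = g₀. -/

noncomputable section
open scoped ContDiff Quaternion

/-! ### Commuting vector fields on a Banach space -/

section Frobenius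

open Set Metric Filter Topology Asymptotics
open scoped NNReal ContDiff

variable {Q : Type*} [NormedAddCommGroup Q] [NormedSpace ℝ Q]

/-- Grönwall's inequality on both sides of the initial time `0`; negative times are handled by
reflecting `φ`. -/
theorem norm_le_gronwallBound_abs {φ φ' : ℝ → Q} {K ε r : ℝ}
    (hd : ∀ t ∈ Ioo (-r) r, HasDerivAt φ (φ' t) t)
    (hb : ∀ t ∈ Ioo (-r) r, ‖φ' t‖ ≤ K * ‖φ t‖ + ε) :
    ∀ t ∈ Ioo (-r) r, ‖φ t‖ ≤ gronwallBound ‖φ 0‖ K ε |t| := by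
  intro t ht
  rcases le_total 0 t with h | h
  · have hsub : ∀ x ∈ Icc 0 t, x ∈ Ioo (-r) r := fun x hx =>
      ⟨by linarith [ht.1, ht.2, hx.1, hx.2], by linarith [ht.1, ht.2, hx.1, hx.2]⟩
    have := norm_le_gronwallBound_of_norm_deriv_right_le (f := φ) (f' := φ') (a := 0) (b := t)
      (δ := ‖φ 0‖) (K := K) (ε := ε)
      (fun x hx => (hd x (hsub x hx)).continuousAt.continuousWithinAt)
      (fun x hx => (hd x (hsub x (Ico_subset_Icc_self hx))).hasDerivWithinAt) le_rfl
      (fun x hx => hb x (hsub x (Ico_subset_Icc_self hx))) t ⟨h, le_rfl⟩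
    simpa [abs_of_nonneg h] using this
  · have hsub : ∀ x ∈ Icc 0 (-t), -x ∈ Ioo (-r) r := fun x hx =>
      ⟨by linarith [ht.1, ht.2, hx.1, hx.2], by linarith [ht.1, ht.2, hx.1, hx.2]⟩
    have hd' : ∀ x ∈ Icc 0 (-t), HasDerivAt (fun y => φ (-y)) (-φ' (-x)) x := fun x hx => by
      simpa [Function.comp_def] using (hd (-x) (hsub x hx)).scomp x (hasDerivAt_neg x)
    have := norm_le_gronwallBound_of_norm_deriv_right_le (f := fun y => φ (-y))
      (f' := fun x => -φ' (-x)) (a := 0) (b := -t)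
      (δ := ‖φ 0‖) (K := K) (ε := ε)
      (fun x hx => (hd' x hx).continuousAt.continuousWithinAt)
      (fun x hx => (hd' x (Ico_subset_Icc_self hx)).hasDerivWithinAt) (by simp)
      (fun x hx => by simpa using hb (-x) (hsub x (Ico_subset_Icc_self hx))) (-t)
      ⟨by linarith, le_rfl⟩
    simpa [abs_of_nonpos h] using this

/-- First-order Taylor estimate for a map with `L`-Lipschitz derivative: the mean value inequality
on the segment from `q` to `p`. -/
theorem norm_sub_sub_fderiv_le {Y : Q → Q} {B : Set Q} (hB : Convex ℝ B)
    (hY : ∀ q ∈ B, DifferentiableAt ℝ Y q) {L : ℝ} (hL0 : 0 ≤ L)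
    (hL : ∀ p ∈ B, ∀ q ∈ B, ‖fderiv ℝ Y p - fderiv ℝ Y q‖ ≤ L * ‖p - q‖)
    {p q : Q} (hp : p ∈ B) (hq : q ∈ B) :
    ‖Y p - Y q - fderiv ℝ Y q (p - q)‖ ≤ L * ‖p - q‖ ^ 2 := by
  have hs : segment ℝ q p ⊆ B := hB.segment_subset hq hp
  have := (convex_segment (𝕜 := ℝ) q p).norm_image_sub_le_of_norm_fderiv_le' (f := Y)
    (φ := fderiv ℝ Y q) (C := L * ‖p - q‖) (fun x hx => hY x (hs hx))
    (fun x hx => (hL x (hs hx) q hq).trans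
      (mul_le_mul_of_nonneg_left (norm_sub_le_of_mem_segment hx) hL0))
    (left_mem_segment ℝ q p) (right_mem_segment ℝ q p)
  linarith

/-- If `s ↦ G s 0` is an integral curve of `X` and every `G s` is an integral curve of a field `Y`
commuting with `X`, then `s ↦ G s t` is an integral curve of `X` for every `t`. The defect
`φ(t) = G s' t - G s t - (s' - s) X (G s t)` satisfies `φ' = DY(φ) + O((s' - s)²)`, because
`DX(Y) = DY(X)`, and `φ(0) = o(s' - s)`; Grönwall's inequality gives `φ(t) = o(s' - s)`. -/
theorem hasDerivAt_of_commute {X Y : Q → Q} {B : Set Q} (hB : Convex ℝ B)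
    (hX : ∀ q ∈ B, DifferentiableAt ℝ X q) (hY : ∀ q ∈ B, DifferentiableAt ℝ Y q)
    {M L : ℝ} (hM0 : 0 < M) (hL0 : 0 ≤ L) (hM : ∀ q ∈ B, ‖fderiv ℝ Y q‖ ≤ M)
    (hL : ∀ p ∈ B, ∀ q ∈ B, ‖fderiv ℝ Y p - fderiv ℝ Y q‖ ≤ L * ‖p - q‖)
    (hcomm : ∀ q ∈ B, fderiv ℝ X q (Y q) = fderiv ℝ Y q (X q))
    {G : ℝ → ℝ → Q} {r C : ℝ}
    (hG : ∀ s ∈ Ioo (-r) r, ∀ t ∈ Ioo (-r) r, G s t ∈ B)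
    (hGt : ∀ s ∈ Ioo (-r) r, ∀ t ∈ Ioo (-r) r, HasDerivAt (G s) (Y (G s t)) t)
    (hG0 : ∀ s ∈ Ioo (-r) r, HasDerivAt (fun s => G s 0) (X (G s 0)) s)
    (hLip : ∀ s ∈ Ioo (-r) r, ∀ s' ∈ Ioo (-r) r, ∀ t ∈ Ioo (-r) r,
      ‖G s' t - G s t‖ ≤ C * |s' - s|) :
    ∀ s ∈ Ioo (-r) r, ∀ t ∈ Ioo (-r) r, HasDerivAt (fun s => G s t) (X (G s t)) s := by
  intro s hs t ht
  set φ : ℝ → ℝ → Q := fun s' τ => G s' τ - G s τ - (s' - s) • X (G s τ) with hφ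
  have key : ∀ s' ∈ Ioo (-r) r, ‖φ s' t‖ ≤
      ‖φ s' 0‖ * Real.exp (M * |t|) +
        (L * C ^ 2 / M * (Real.exp (M * |t|) - 1)) * (s' - s) ^ 2 := by
    intro s' hs'
    have h1 := norm_le_gronwallBound_abs (φ := φ s') (K := M) (ε := L * C ^ 2 * (s' - s) ^ 2)
      (r := r) (φ' := fun τ => Y (G s' τ) - Y (G s τ) -
        (s' - s) • fderiv ℝ X (G s τ) (Y (G s τ)))
      (fun τ hτ => ((hGt s' hs' τ hτ).sub (hGt s hs τ hτ)).sub
        (((hX _ (hG s hs τ hτ)).hasFDerivAt.comp_hasDerivAt τ (hGt s hs τ hτ)).const_smul _))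
      (fun τ hτ => by
        have hq := hG s hs τ hτ
        have hp := hG s' hs' τ hτ
        have e : Y (G s' τ) - Y (G s τ) - (s' - s) • fderiv ℝ X (G s τ) (Y (G s τ)) =
            fderiv ℝ Y (G s τ) (φ s' τ) +
            (Y (G s' τ) - Y (G s τ) - fderiv ℝ Y (G s τ) (G s' τ - G s τ)) := by
          rw [hcomm _ hq]; simp only [hφ, map_sub, map_smul]; abel
        rw [e]
        refine (norm_add_le _ _).trans (add_le_add ?_ ?_)
        · exact ((fderiv ℝ Y (G s τ)).le_opNorm _).trans
            (mul_le_mul_of_nonneg_right (hM _ hq) (norm_nonneg _))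
        · refine (norm_sub_sub_fderiv_le hB hY hL0 hL hp hq).trans ?_
          rw [mul_assoc]
          refine mul_le_mul_of_nonneg_left ?_ hL0
          calc ‖G s' τ - G s τ‖ ^ 2 ≤ (C * |s' - s|) ^ 2 :=
                pow_le_pow_left₀ (norm_nonneg _) (hLip s hs s' hs' τ hτ) 2
            _ = C ^ 2 * (s' - s) ^ 2 := by rw [mul_pow, sq_abs]) t ht
    rw [gronwallBound_of_K_ne_0 hM0.ne'] at h1
    refine h1.trans (le_of_eq ?_)
    ring
  have hnhds : Ioo (-r) r ∈ 𝓝 s := Ioo_mem_nhds hs.1 hs.2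
  have h0 : (fun s' => φ s' 0) =o[𝓝 s] fun s' => s' - s := by
    simpa only [hφ] using hasDerivAt_iff_isLittleO.1 (hG0 s hs)
  have h2 : (fun s' : ℝ => (s' - s) ^ 2) =o[𝓝 s] fun s' => s' - s := by
    have : Tendsto (fun s' : ℝ => s' - s) (𝓝 s) (𝓝 0) := by
      have : ContinuousAt (fun s' : ℝ => s' - s) s := by fun_prop
      simpa [ContinuousAt] using this
    simpa [sq, Function.comp_def] using
      (((isLittleO_one_iff ℝ).2 this).mul_isBigO (isBigO_refl (fun s' : ℝ => s' - s) (𝓝 s)))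
  rw [hasDerivAt_iff_isLittleO]
  refine IsBigO.trans_isLittleO (g := fun s' => ‖φ s' 0‖ * Real.exp (M * |t|) +
        (L * C ^ 2 / M * (Real.exp (M * |t|) - 1)) * (s' - s) ^ 2) ?_ ?_
  · refine IsBigO.of_bound 1 ?_
    filter_upwards [hnhds] with s' hs'
    rw [one_mul]
    exact (key s' hs').trans (le_abs_self _)
  · refine IsLittleO.add ?_ (h2.const_mul_left _)
    simpa [mul_comm] using h0.norm_left.const_mul_left (Real.exp (M * |t|))

/-- Bootstrapping: the equation expresses `fderiv G` smoothly through `G`, so each order of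
smoothness of `G` yields the next. -/
theorem contDiffOn_of_hasFDerivAt {X Y : Q → Q} {W : Set Q}
    (hX : ContDiffOn ℝ ∞ X W) (hY : ContDiffOn ℝ ∞ Y W) {G : ℝ × ℝ → Q} {V : Set (ℝ × ℝ)}
    (hV : IsOpen V) (hW : ∀ p ∈ V, G p ∈ W)
    (hG : ∀ p ∈ V, HasFDerivAt G ((ContinuousLinearMap.toSpanSingleton ℝ (X (G p))).coprod
      (ContinuousLinearMap.toSpanSingleton ℝ (Y (G p)))) p) :
    ContDiffOn ℝ ∞ G V := by
  have hdiff : DifferentiableOn ℝ G V := fun p hp =>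
    (hG p hp).differentiableAt.differentiableWithinAt
  rw [contDiffOn_infty]
  intro n
  induction n with
  | zero => exact contDiffOn_zero.2 hdiff.continuousOn
  | succ n ih =>
    push_cast
    rw [contDiffOn_succ_iff_fderiv_of_isOpen hV]
    refine ⟨hdiff, by simp, ?_⟩
    have hXG : ContDiffOn ℝ n (fun p => X (G p)) V :=
      (hX.of_le (by exact_mod_cast le_top)).comp ih hW
    have hYG : ContDiffOn ℝ n (fun p => Y (G p)) V :=
      (hY.of_le (by exact_mod_cast le_top)).comp ih hW
    have : ContDiffOn ℝ n (fun p =>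
      (ContinuousLinearMap.smulRightL ℝ (ℝ × ℝ) Q (ContinuousLinearMap.fst ℝ ℝ ℝ)) (X (G p)) +
      (ContinuousLinearMap.smulRightL ℝ (ℝ × ℝ) Q (ContinuousLinearMap.snd ℝ ℝ ℝ)) (Y (G p))) V :=
      ((ContinuousLinearMap.contDiff _).comp_contDiffOn hXG).add
        ((ContinuousLinearMap.contDiff _).comp_contDiffOn hYG)
    refine this.congr fun p hp => ?_
    rw [(hG p hp).fderiv]
    ext <;> simp

/-- Frobenius theorem for two commuting vector fields: through each point there is a smooth map
`G` of two real variables with `∂₁G = X ∘ G` and `∂₂G = Y ∘ G`. It is `G (s, t) = α (γ s) t`, where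
`γ` is the integral curve of `X` through the point and `α` is the local flow of `Y`. -/
theorem exists_map_of_commute [CompleteSpace Q] {X Y : Q → Q} {W : Set Q} (hWo : IsOpen W)
    (hX : ContDiffOn ℝ ∞ X W) (hY : ContDiffOn ℝ ∞ Y W)
    (hcomm : ∀ q ∈ W, fderiv ℝ X q (Y q) = fderiv ℝ Y q (X q)) {q₀ : Q} (hq₀ : q₀ ∈ W) :
    ∃ δ > (0 : ℝ), ∃ G : ℝ × ℝ → Q, G 0 = q₀ ∧ (∀ p ∈ ball (0 : ℝ × ℝ) δ, G p ∈ W) ∧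
      ContDiffOn ℝ ∞ G (ball 0 δ) ∧ ∀ p ∈ ball (0 : ℝ × ℝ) δ,
        HasFDerivAt G ((ContinuousLinearMap.toSpanSingleton ℝ (X (G p))).coprod
          (ContinuousLinearMap.toSpanSingleton ℝ (Y (G p)))) p := by
  have hXa : ContDiffAt ℝ ∞ X q₀ := hX.contDiffAt (hWo.mem_nhds hq₀)
  have hYa : ContDiffAt ℝ ∞ Y q₀ := hY.contDiffAt (hWo.mem_nhds hq₀)
  have hDY : ContDiffAt ℝ 1 (fderiv ℝ Y) q₀ := hYa.fderiv_right (by norm_cast)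
  -- On the ball `B`, `X` and `fderiv Y` are bounded and `fderiv Y` is Lipschitz.
  obtain ⟨L, S, hS, hSL⟩ := hDY.exists_lipschitzOnWith
  have hM : ∀ᶠ q in 𝓝 q₀, ‖fderiv ℝ Y q‖ < ‖fderiv ℝ Y q₀‖ + 1 :=
    hDY.continuousAt.norm.eventually (gt_mem_nhds (by linarith))
  have hN : ∀ᶠ q in 𝓝 q₀, ‖X q‖ < ‖X q₀‖ + 1 :=
    hXa.continuousAt.norm.eventually (gt_mem_nhds (by linarith))
  obtain ⟨ρ, hρ, hB⟩ := Metric.mem_nhds_iff.1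
    (inter_mem (inter_mem hS (hWo.mem_nhds hq₀)) (inter_mem hM hN))
  set B := ball q₀ ρ
  have hBW : B ⊆ W := fun q hq => (hB hq).1.2
  obtain ⟨γ, hγ0, ε₁, hε₁, hγ⟩ :=
    (hXa.of_le (by norm_cast) : ContDiffAt ℝ 1 X
      q₀).exists_forall_mem_closedBall_exists_eq_forall_mem_Ioo_hasDerivAt₀ 0
  obtain ⟨ε₂, hε₂, a, R, _, _, hR, hPL⟩ := IsPicardLindelof.of_contDiffAt_one
    (hYa.of_le (by norm_cast) : ContDiffAt ℝ 1 Y q₀)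
  obtain ⟨α, hα, L', hL'⟩ :=
    (hPL 0).exists_forall_mem_closedBall_eq_hasDerivWithinAt_lipschitzOnWith
  simp only [zero_sub, zero_add] at hγ hα hL'
  have hαc : ContinuousOn (Function.uncurry α) (closedBall q₀ R ×ˢ Icc (-ε₂) ε₂) :=
    continuousOn_prod_of_continuousOn_lipschitzOnWith _ L'
      (fun x hx => HasDerivWithinAt.continuousOn (hα x hx).2) hL'
  have hγc : ContinuousAt γ 0 := (hγ 0 ⟨by linarith, hε₁⟩).continuousAt
  have hαc0 : ContinuousAt (Function.uncurry α) (q₀, 0) :=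
    hαc.continuousAt (prod_mem_nhds (closedBall_mem_nhds _ (by exact_mod_cast hR))
      (Icc_mem_nhds (by linarith) hε₂))
  have hα0 : α q₀ 0 = q₀ := (hα q₀ (mem_closedBall_self R.2)).1
  have hGc0 : Tendsto (fun p : ℝ × ℝ => α (γ p.1) p.2) (𝓝 0) (𝓝 q₀) := by
    have h1 : Tendsto (fun p : ℝ × ℝ => (γ p.1, p.2)) (𝓝 0) (𝓝 (q₀, 0)) := by
      have h2 : Tendsto (fun p : ℝ × ℝ => γ p.1) (𝓝 0) (𝓝 q₀) := by
        rw [← hγ0]; exact hγc.tendsto.comp (continuous_fst.tendsto' _ _ rfl)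
      exact h2.prodMk_nhds (continuous_snd.tendsto' _ _ rfl)
    have := hαc0.tendsto.comp h1
    simpa [Function.uncurry, Function.comp_def, hα0] using this
  have e1 : ∀ᶠ p : ℝ × ℝ in 𝓝 0, α (γ p.1) p.2 ∈ B := hGc0 (ball_mem_nhds _ hρ)
  have e2 : ∀ᶠ s in 𝓝 (0 : ℝ), γ s ∈ closedBall q₀ R ∩ B :=
    hγc.eventually_mem (hγ0.symm ▸ inter_mem
      (closedBall_mem_nhds _ (by exact_mod_cast hR)) (ball_mem_nhds _ hρ))
  obtain ⟨δ₁, hδ₁, h1⟩ := Metric.mem_nhds_iff.1 e1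
  obtain ⟨δ₂, hδ₂, h2⟩ := Metric.mem_nhds_iff.1 e2
  set δ := min (min δ₁ δ₂) (min ε₁ ε₂)
  have hδ : 0 < δ := lt_min (lt_min hδ₁ hδ₂) (lt_min hε₁ hε₂)
  have d1 : δ ≤ δ₁ := (min_le_left _ _).trans (min_le_left _ _)
  have d2 : δ ≤ δ₂ := (min_le_left _ _).trans (min_le_right _ _)
  have d3 : δ ≤ ε₁ := (min_le_right _ _).trans (min_le_left _ _)
  have d4 : δ ≤ ε₂ := (min_le_right _ _).trans (min_le_right _ _)
  have hmem : ∀ p : ℝ × ℝ, p ∈ ball (0 : ℝ × ℝ) δ ↔ p.1 ∈ Ioo (-δ) δ ∧ p.2 ∈ Ioo (-δ) δ := by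
    intro p
    simp only [mem_ball_zero_iff, Prod.norm_def, sup_lt_iff, Real.norm_eq_abs, abs_lt, mem_Ioo]
  have hγB : ∀ s ∈ Ioo (-δ) δ, γ s ∈ closedBall q₀ R ∩ B := fun s hs =>
    h2 (by rw [mem_ball_zero_iff, Real.norm_eq_abs]; exact (abs_lt.2 hs).trans_le d2)
  have hGB : ∀ s ∈ Ioo (-δ) δ, ∀ t ∈ Ioo (-δ) δ, α (γ s) t ∈ B := fun s hs t ht =>
    h1 (ball_subset_ball d1 ((hmem (s, t)).2 ⟨hs, ht⟩))
  have hγd : ∀ s ∈ Ioo (-δ) δ, HasDerivAt γ (X (γ s)) s := fun s hs =>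
    hγ s (Ioo_subset_Ioo (by linarith) d3 hs)
  have hGt : ∀ s ∈ Ioo (-δ) δ, ∀ t ∈ Ioo (-δ) δ, HasDerivAt (α (γ s)) (Y (α (γ s) t)) t := by
    intro s hs t ht
    have ht' : t ∈ Ioo (-ε₂) ε₂ := Ioo_subset_Ioo (by linarith) d4 ht
    exact ((hα _ (hγB s hs).1).2 t (Ioo_subset_Icc_self ht')).hasDerivAt
      (Icc_mem_nhds ht'.1 ht'.2)
  have h00 : (0 : ℝ) ∈ Ioo (-δ) δ := ⟨by linarith, hδ⟩
  have hG0 : ∀ s ∈ Ioo (-δ) δ, HasDerivAt (fun s => α (γ s) 0) (X (α (γ s) 0)) s := by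
    intro s hs
    rw [(hα _ (hγB s hs).1).1]
    refine (hγd s hs).congr_of_eventuallyEq ?_
    filter_upwards [Ioo_mem_nhds hs.1 hs.2] with s' hs'
    exact (hα _ (hγB s' hs').1).1
  have hLip : ∀ s ∈ Ioo (-δ) δ, ∀ s' ∈ Ioo (-δ) δ, ∀ t ∈ Ioo (-δ) δ,
      ‖α (γ s') t - α (γ s) t‖ ≤ (L' * (‖X q₀‖ + 1)) * |s' - s| := by
    intro s hs s' hs' t ht
    have hγL : ‖γ s' - γ s‖ ≤ (‖X q₀‖ + 1) * ‖s' - s‖ :=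
      (convex_Ioo (-δ) δ).norm_image_sub_le_of_norm_hasDerivWithin_le
        (fun x hx => (hγd x hx).hasDerivWithinAt)
        (fun x hx => le_of_lt (hB (hγB x hx).2).2.2) hs hs'
    have := (hL' t ⟨by linarith [ht.1], by linarith [ht.2]⟩).norm_sub_le
      (hγB s' hs').1 (hγB s hs).1
    rw [mul_assoc]
    exact this.trans (mul_le_mul_of_nonneg_left hγL L'.2)
  have hdX : ∀ q ∈ B, DifferentiableAt ℝ X q := fun q hq =>
    (hX.contDiffAt (hWo.mem_nhds (hBW hq))).differentiableAt (by simp)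
  have hdY : ∀ q ∈ B, DifferentiableAt ℝ Y q := fun q hq =>
    (hY.contDiffAt (hWo.mem_nhds (hBW hq))).differentiableAt (by simp)
  have hGs := hasDerivAt_of_commute (convex_ball q₀ ρ) hdX hdY
    (M := ‖fderiv ℝ Y q₀‖ + 1) (L := L) (by positivity) L.2
    (fun q hq => le_of_lt (hB hq).2.1)
    (fun p hp q hq => hSL.norm_sub_le (hB hp).1.1 (hB hq).1.1)
    (fun q hq => hcomm q (hBW hq)) (G := fun s t => α (γ s) t) hGB hGt hG0 hLip
  -- Both partial derivatives are continuous, which upgrades them to a Fréchet derivative.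
  have hGc : ContinuousOn (fun p : ℝ × ℝ => α (γ p.1) p.2) (ball 0 δ) := by
    refine hαc.comp (f := fun p : ℝ × ℝ => (γ p.1, p.2)) ?_ ?_
    · refine ContinuousOn.prodMk ?_ continuousOn_snd
      intro p hp
      exact ((hγd p.1 ((hmem p).1 hp).1).continuousAt.comp
        (f := Prod.fst) continuous_fst.continuousAt).continuousWithinAt
    · intro p hp
      obtain ⟨hp1, hp2⟩ := (hmem p).1 hp
      exact ⟨(hγB _ hp1).1, by linarith [hp2.1], by linarith [hp2.2]⟩
  have hfd : ∀ p ∈ ball (0 : ℝ × ℝ) δ, HasFDerivAt (fun p : ℝ × ℝ => α (γ p.1) p.2)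
      ((ContinuousLinearMap.toSpanSingleton ℝ (X (α (γ p.1) p.2))).coprod
          (ContinuousLinearMap.toSpanSingleton ℝ (Y (α (γ p.1) p.2)))) p := by
    intro p hp
    obtain ⟨hp1, hp2⟩ := (hmem p).1 hp
    have hpn : ball (0 : ℝ × ℝ) δ ∈ 𝓝 p := isOpen_ball.mem_nhds hp
    have hGp : ContinuousAt (fun p : ℝ × ℝ => α (γ p.1) p.2) p := hGc.continuousAt hpn
    have hpB := hGB _ hp1 _ hp2
    have cX : ContinuousAt (fun p : ℝ × ℝ => X (α (γ p.1) p.2)) p :=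
      ContinuousAt.comp (g := X) (hdX _ hpB).continuousAt hGp
    have cY : ContinuousAt (fun p : ℝ × ℝ => Y (α (γ p.1) p.2)) p :=
      ContinuousAt.comp (g := Y) (hdY _ hpB).continuousAt hGp
    have := hasStrictFDerivAt_uncurry_coprod (𝕜 := ℝ) (u := p) (f := fun s t => α (γ s) t)
      (f₁ := fun s t => ContinuousLinearMap.toSpanSingleton ℝ (X (α (γ s) t)))
      (f₂ := fun s t => ContinuousLinearMap.toSpanSingleton ℝ (Y (α (γ s) t)))
      (by
        filter_upwards [hpn] with v hv
        obtain ⟨hv1, hv2⟩ := (hmem v).1 hv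
        exact (hGs _ hv1 _ hv2).hasFDerivAt)
      (by
        filter_upwards [hpn] with v hv
        obtain ⟨hv1, hv2⟩ := (hmem v).1 hv
        exact (hGt _ hv1 _ hv2).hasFDerivAt)
      (((ContinuousLinearMap.toSpanSingletonCLE (𝕜 := ℝ) (E := Q)).continuous.continuousAt).comp cX)
      (((ContinuousLinearMap.toSpanSingletonCLE (𝕜 := ℝ) (E := Q)).continuous.continuousAt).comp cY)
    exact this.hasFDerivAt
  have hGW : ∀ p ∈ ball (0 : ℝ × ℝ) δ, α (γ p.1) p.2 ∈ W := fun p hp =>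
    hBW (hGB _ ((hmem p).1 hp).1 _ ((hmem p).1 hp).2)
  exact ⟨δ, hδ, fun p => α (γ p.1) p.2, by simp [hγ0, hα0], hGW,
    contDiffOn_of_hasFDerivAt hX hY isOpen_ball hGW hfd, hfd⟩

end Frobenius

/-! ### The Riccati fields -/

section Riccati

variable (l : ℝ)

/-- The lift to `ℝ² × ℍ` of the Riccati equation `∂ₑ g = g (l A) g - B` in the direction `e`: the
base point moves with velocity `e`, the fibre coordinate with velocity `g (l A) g - B`. -/
def riccatiField (e : ℝ × ℝ) (A B : ℝ × ℝ → HQ) (q : (ℝ × ℝ) × HQ) : (ℝ × ℝ) × HQ :=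
  (e, q.2 * ((l : HQ) * A q.1) * q.2 - B q.1)

theorem contDiffOn_riccatiField {U : Set (ℝ × ℝ)} {e : ℝ × ℝ} {A B : ℝ × ℝ → HQ}
    (hA : ContDiffOn ℝ ∞ A U) (hB : ContDiffOn ℝ ∞ B U) :
    ContDiffOn ℝ ∞ (riccatiField l e A B) (U ×ˢ Set.univ) := by
  have hA' : ContDiffOn ℝ ∞ (fun q : (ℝ × ℝ) × HQ => A q.1) (U ×ˢ Set.univ) :=
    hA.comp contDiffOn_fst fun q hq => hq.1
  have hB' : ContDiffOn ℝ ∞ (fun q : (ℝ × ℝ) × HQ => B q.1) (U ×ˢ Set.univ) :=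
    hB.comp contDiffOn_fst fun q hq => hq.1
  exact contDiffOn_const.prodMk
    (((contDiffOn_snd.mul (contDiffOn_const.mul hA')).mul contDiffOn_snd).sub hB')

theorem fderiv_riccatiField {e : ℝ × ℝ} {A B : ℝ × ℝ → HQ} {q : (ℝ × ℝ) × HQ}
    (hA : DifferentiableAt ℝ A q.1) (hB : DifferentiableAt ℝ B q.1) (v : (ℝ × ℝ) × HQ) :
    fderiv ℝ (riccatiField l e A B) q v =
      (0, v.2 * ((l : HQ) * A q.1) * q.2 + q.2 * ((l : HQ) * fderiv ℝ A q.1 v.1) * q.2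
        + q.2 * ((l : HQ) * A q.1) * v.2 - fderiv ℝ B q.1 v.1) := by
  have hA' : HasFDerivAt (fun q : (ℝ × ℝ) × HQ => A q.1) _ q :=
    hA.hasFDerivAt.comp q hasFDerivAt_fst
  have hB' : HasFDerivAt (fun q : (ℝ × ℝ) × HQ => B q.1) _ q :=
    hB.hasFDerivAt.comp q hasFDerivAt_fst
  have h2 : HasFDerivAt (fun q : (ℝ × ℝ) × HQ => q.2) _ q := hasFDerivAt_snd (𝕜 := ℝ)
  have := (hasFDerivAt_const e q).prodMk
    (((h2.mul' ((hasFDerivAt_const (l : HQ) q).mul' hA')).mul' h2).sub hB')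
  have h3 : HasFDerivAt (riccatiField l e A B) _ q := this
  rw [h3.fderiv]
  simp
  noncomm_ring

end Riccati

theorem riccati_complete_integrability
    (U : Set (ℝ × ℝ)) (hU : IsOpen U) (f fs : ℝ × ℝ → HQ)
    (hf : ContDiffOn ℝ ∞ f U) (hfs : ContDiffOn ℝ ∞ fs U)
    (hfIm : ∀ p ∈ U, (f p).re = 0) (hfsIm : ∀ p ∈ U, (fs p).re = 0)
    (hC : ∀ p ∈ U, pdx f p * pdy fs p = pdy f p * pdx fs p)
    (l : ℝ) (p₀ : ℝ × ℝ) (hp₀ : p₀ ∈ U) (g₀ : HQ) :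
    ∃ V : Set (ℝ × ℝ), IsOpen V ∧ p₀ ∈ V ∧ V ⊆ U ∧
      ∃ g : ℝ × ℝ → HQ, g p₀ = g₀ ∧ ContDiffOn ℝ ∞ g V ∧
        ∀ p ∈ V, pdx g p = g p * ((l : HQ) * pdx fs p) * g p - pdx f p ∧
                 pdy g p = g p * ((l : HQ) * pdy fs p) * g p - pdy f p := by
  -- Partial derivatives of an imaginary-valued map are imaginary.
  have him : ∀ (h : ℝ × ℝ → HQ), ContDiffOn ℝ ∞ h U → (∀ p ∈ U, (h p).re = 0) →
      ∀ p ∈ U, ∀ v, star (fderiv ℝ h p v) = - fderiv ℝ h p v := by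
    intro h hh hre p hp v
    have hd : DifferentiableAt ℝ h p :=
      (hh.contDiffAt (hU.mem_nhds hp)).differentiableAt (by simp)
    let T : HQ →L[ℝ] ℝ := ⟨QuaternionAlgebra.reₗ (-1 : ℝ) 0 (-1), Quaternion.continuous_re⟩
    have h1 : HasFDerivAt (fun p => (h p).re) (T.comp (fderiv ℝ h p)) p :=
      T.hasFDerivAt.comp p hd.hasFDerivAt
    have h2 : HasFDerivAt (fun p => (h p).re) (0 : ℝ × ℝ →L[ℝ] ℝ) p := by
      refine (hasFDerivAt_const (0 : ℝ) p).congr_of_eventuallyEq ?_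
      filter_upwards [hU.mem_nhds hp] with p' hp'
      exact hre p' hp'
    exact Quaternion.star_eq_neg.2 (congrArg (fun T => T v) (h1.unique h2))
  -- Conjugating the Christoffel relation reverses the order of its factors.
  have hC' : ∀ p ∈ U, pdy fs p * pdx f p = pdx fs p * pdy f p := by
    intro p hp
    have := congrArg star (hC p hp)
    simpa only [star_mul, pdx, pdy, him f hf hfIm p hp, him fs hfs hfsIm p hp, neg_mul_neg]
      using this
  have hpd : ∀ (h : ℝ × ℝ → HQ), ContDiffOn ℝ ∞ h U → ∀ v,
      ContDiffOn ℝ ∞ (fun p => fderiv ℝ h p v) U := fun h hh v =>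
    ((contDiffOn_infty_iff_fderiv_of_isOpen hU).1 hh).2.clm_apply contDiffOn_const
  have hda : ∀ (h : ℝ × ℝ → HQ), ContDiffOn ℝ ∞ h U → ∀ v, ∀ p ∈ U,
      DifferentiableAt ℝ (fun p => fderiv ℝ h p v) p := fun h hh v p hp =>
    ((hpd h hh v).contDiffAt (hU.mem_nhds hp)).differentiableAt (by simp)
  have hsymm : ∀ (h : ℝ × ℝ → HQ), ContDiffOn ℝ ∞ h U → ∀ p ∈ U,
      fderiv ℝ (pdx h) p (0, 1) = fderiv ℝ (pdy h) p (1, 0) := by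
    intro h hh p hp
    have hc := hh.contDiffAt (hU.mem_nhds hp)
    have hs := hc.isSymmSndFDerivAt (by simp; norm_cast)
    have hd : DifferentiableAt ℝ (fderiv ℝ h) p :=
      (((contDiffOn_infty_iff_fderiv_of_isOpen hU).1 hh).2.contDiffAt
        (hU.mem_nhds hp)).differentiableAt (by simp)
    have e : ∀ v w, fderiv ℝ (fun p => fderiv ℝ h p v) p w = fderiv ℝ (fderiv ℝ h) p w v := by
      intro v w
      rw [fderiv_clm_apply hd (differentiableAt_const v)]
      simp
    change fderiv ℝ (fun p => fderiv ℝ h p (1, 0)) p (0, 1) =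
      fderiv ℝ (fun p => fderiv ℝ h p (0, 1)) p (1, 0)
    rw [e, e]
    exact hs _ _
  obtain ⟨δ, hδ, G, hG0, hGW, hGs, hGd⟩ := exists_map_of_commute
    (X := riccatiField l (1, 0) (pdx fs) (pdx f)) (Y := riccatiField l (0, 1) (pdy fs) (pdy f))
    (W := U ×ˢ Set.univ) (q₀ := (p₀, g₀)) (hU.prod isOpen_univ)
    (contDiffOn_riccatiField l (hpd fs hfs (1, 0)) (hpd f hf (1, 0)))
    (contDiffOn_riccatiField l (hpd fs hfs (0, 1)) (hpd f hf (0, 1)))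
    (by
      rintro ⟨p, g⟩ ⟨hp, -⟩
      rw [fderiv_riccatiField l (hda fs hfs (1, 0) p hp) (hda f hf (1, 0) p hp),
        fderiv_riccatiField l (hda fs hfs (0, 1) p hp) (hda f hf (0, 1) p hp)]
      simp only [riccatiField]
      -- Second derivatives agree by symmetry, the cubic terms cancel in pairs, and the terms
      -- linear in `g` agree by the two forms of the Christoffel relation.
      rw [hsymm fs hfs p hp, hsymm f hf p hp]
      have c1 := hC p hp
      have c2 := hC' p hp
      simp only [Quaternion.coe_mul_eq_smul, Prod.mk.injEq, true_and]
      simp only [sub_mul, mul_sub, smul_mul_assoc, mul_smul_comm, smul_sub]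
      have c1' : pdx f p * pdy fs p * g = pdy f p * pdx fs p * g := by rw [c1]
      have c2' : g * pdy fs p * pdx f p = g * pdx fs p * pdy f p := by
        rw [mul_assoc, c2, mul_assoc]
      rw [c1', c2']
      simp only [mul_assoc]
      abel)
    ⟨hp₀, trivial⟩
  -- The base component of both fields is constant, so `G` is a graph over a translate of the plane.
  have hG1 : ∀ p ∈ Metric.ball (0 : ℝ × ℝ) δ, (G p).1 = p₀ + p := by
    intro p hp
    have hd : ∀ p ∈ Metric.ball (0 : ℝ × ℝ) δ,
        HasFDerivAt (fun p => (G p).1 - p) (0 : ℝ × ℝ →L[ℝ] ℝ × ℝ) p := by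
      intro p hp
      have h1 := (hGd p hp).fst.sub (hasFDerivAt_id p)
      refine (HasFDerivAt.congr_fderiv (f := fun p => (G p).1 - p) h1 ?_)
      ext <;> simp [riccatiField]
    have := (convex_ball (0 : ℝ × ℝ) δ).is_const_of_fderivWithin_eq_zero (𝕜 := ℝ)
      (fun p hp => (hd p hp).differentiableAt.differentiableWithinAt)
      (fun p hp => by
        rw [fderivWithin_of_isOpen Metric.isOpen_ball hp, (hd p hp).fderiv])
      hp (Metric.mem_ball_self hδ)
    simp only [hG0, sub_zero] at this
    rw [← this]; abel
  have hball : ∀ p ∈ Metric.ball p₀ δ, p - p₀ ∈ Metric.ball (0 : ℝ × ℝ) δ := by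
    intro p hp
    simpa [dist_eq_norm] using hp
  have hGp : ∀ p ∈ Metric.ball p₀ δ, (G (p - p₀)).1 = p := fun p hp => by
    rw [hG1 _ (hball p hp)]; abel
  refine ⟨Metric.ball p₀ δ, Metric.isOpen_ball, Metric.mem_ball_self hδ, fun p hp => ?_,
    fun p => (G (p - p₀)).2, by simp [hG0], ?_, fun p hp => ?_⟩
  · rw [← hGp p hp]; exact (hGW _ (hball p hp)).1
  · exact (hGs.comp (contDiffOn_id.sub contDiffOn_const) hball).snd
  · have hd : HasFDerivAt (fun p => (G (p - p₀)).2) _ p :=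
      ((hGd _ (hball p hp)).comp p ((hasFDerivAt_id p).sub_const p₀)).snd
    simp only [pdx, pdy, hd.fderiv]
    constructor <;> simp [riccatiField, hGp p hp, pdx, pdy]

end
end

section
/- (The T_λ-transform is isothermic and T_λCf is its Darboux transform.) Let f, f★ : U → Im ℍ be smooth with f_x·f★_y = f_y·f★_x on U, let λ ∈ ℝ, and let F : U → M₂(ℍ) be smooth with entries F₁₁, F₁₂, F₂₁, F₂₂ such that F₂₁(p) and F₂₂(p) are invertible for all p, satisfying ∂_x F = F·[[0, λ·f★_x],[f_x, 0]] and ∂_y F = F·[[0, λ·f★_y],[f_y, 0]]. Set g := F₁₁·F₂₁⁻¹ and ĝ := F₁₂·F₂₂⁻¹. Then on U: ∂_x g = (ĝ − g)·F₂₂·f_x·F₂₁⁻¹, ∂_y g = (ĝ − g)·F₂₂·f_y·F₂₁⁻¹, ∂_x ĝ = (g − ĝ)·F₂₁·λ·f★_x·F₂₂⁻¹, ∂_y ĝ = (g − ĝ)·F₂₁·λ·f★_y·F₂₂⁻¹; and wherever g(p) ≠ ĝ(p), the Darboux condition ∂_x g·(g − ĝ)⁻¹·∂_y ĝ = ∂_y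 g·(g − ĝ)⁻¹·∂_x ĝ holds. -/
/-!
Each entry of the frame satisfies a first order equation, so differentiating `g = F₁₁ F₂₁⁻¹`
gives `∂g = (F₁₂ - g F₂₂) ∂f F₂₁⁻¹`, and `F₁₂ = ĝ F₂₂` turns this into
`(ĝ - g) F₂₂ ∂f F₂₁⁻¹`; the formula for `ĝ` is the same with the columns exchanged
(`fderiv_affQ`). In `∂_x g (g - ĝ)⁻¹ ∂_y ĝ` the inner factors `F₂₁⁻¹ (g - ĝ)⁻¹ (g - ĝ) F₂₁`
cancel, and since `λ` is central what remains is `(ĝ - g) F₂₂ λ (f_x f★_y) F₂₂⁻¹`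
(`darboux_product`). It is symmetric in `x` and `y` by the Christoffel relation.
-/

/- STATEMENT 9 (The T_λ-transform is isothermic, and T_λCf is its Darboux transform):
Given a Christoffel pair f, f★ : U → Im ℍ and a frame F integrating
Φ_λ = [[0, λ df★],[df, 0]] with F₂₁, F₂₂ pointwise invertible, the affine
projections g = F₁₁·F₂₁⁻¹ and ĝ = F₁₂·F₂₂⁻¹ satisfy
∂g = (ĝ − g)·F₂₂·df·F₂₁⁻¹, ∂ĝ = (g − ĝ)·F₂₁·(λ df★)·F₂₂⁻¹, and, wherever g ≠ ĝ,
the Darboux condition ∂_x g·(g − ĝ)⁻¹·∂_y ĝ = ∂_y g·(g − ĝ)⁻¹·∂_x ĝ. -/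

noncomputable section
open scoped ContDiff Quaternion

/-- Affine projection `p ↦ a p * (b p)⁻¹`. -/
noncomputable def affQ (a b : ℝ × ℝ → HQ) : ℝ × ℝ → HQ := fun p => a p * (b p)⁻¹

/-- Derivative of `a b⁻¹` in direction `v`, given that the `v`-derivatives of `a` and `b` are
`c w` and `d w` (a row of the frame equation). The result is written with the difference of
the affine points `c d⁻¹` and `a b⁻¹`. -/
theorem fderiv_affQ {a b c d : ℝ × ℝ → HQ} {p v : ℝ × ℝ} {w : HQ}
    (ha : DifferentiableAt ℝ a p) (hb : DifferentiableAt ℝ b p)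
    (hb0 : b p ≠ 0) (hd0 : d p ≠ 0)
    (hav : fderiv ℝ a p v = c p * w) (hbv : fderiv ℝ b p v = d p * w) :
    fderiv ℝ (affQ a b) p v = (affQ c d p - affQ a b p) * d p * w * (b p)⁻¹ := by
  have hinv : HasFDerivAt (fun q => (b q)⁻¹) _ p :=
    (hasFDerivAt_inv' (𝕜 := ℝ) hb0).comp p hb.hasFDerivAt
  have h : HasFDerivAt (affQ a b) _ p := ha.hasFDerivAt.mul' hinv
  rw [h.fderiv]
  have hcd : c p * (d p)⁻¹ * d p = c p := inv_mul_cancel_right₀ hd0 _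
  simp only [affQ, sub_mul, hcd]
  simp [hav, hbv, mul_assoc]
  abel

/-- The algebra behind the Darboux condition: the product of the two derivative formulas
telescopes to an expression that depends on `u` and `v` only through `u * v`. -/
theorem darboux_product {g gh b d u v : HQ} (l : ℝ) (hb : b ≠ 0) (hne : g ≠ gh) :
    ((gh - g) * d * u * b⁻¹) * (g - gh)⁻¹ * ((g - gh) * b * ((l : HQ) * v) * d⁻¹) =
      (gh - g) * d * ((l : HQ) * (u * v)) * d⁻¹ := by
  have hm : g - gh ≠ 0 := sub_ne_zero.mpr hne
  have hl : u * ((l : HQ) * v) = (l : HQ) * (u * v) := by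
    rw [← mul_assoc, ← mul_assoc, (Quaternion.coe_commutes l u).symm]
  rw [← hl]
  simp only [mul_assoc, inv_mul_cancel_left₀ hm, inv_mul_cancel_left₀ hb]

theorem T_transform_is_isothermic
    (U : Set (ℝ × ℝ)) (hU : IsOpen U) (f fs : ℝ × ℝ → HQ) (l : ℝ)
    (hf : ContDiffOn ℝ ∞ f U) (hfs : ContDiffOn ℝ ∞ fs U)
    (hfIm : ∀ p ∈ U, (f p).re = 0) (hfsIm : ∀ p ∈ U, (fs p).re = 0)
    (hC : ∀ p ∈ U, pdx f p * pdy fs p = pdy f p * pdx fs p)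
    (F₁₁ F₁₂ F₂₁ F₂₂ : ℝ × ℝ → HQ)
    (hF₁₁ : ContDiffOn ℝ ∞ F₁₁ U) (hF₁₂ : ContDiffOn ℝ ∞ F₁₂ U)
    (hF₂₁ : ContDiffOn ℝ ∞ F₂₁ U) (hF₂₂ : ContDiffOn ℝ ∞ F₂₂ U)
    (hinv₂₁ : ∀ p ∈ U, F₂₁ p ≠ 0) (hinv₂₂ : ∀ p ∈ U, F₂₂ p ≠ 0)
    -- ∂_x F = F·[[0, λ·f★_x],[f_x, 0]]
    (h11x : ∀ p ∈ U, pdx F₁₁ p = F₁₂ p * pdx f p)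
    (h12x : ∀ p ∈ U, pdx F₁₂ p = F₁₁ p * ((l : HQ) * pdx fs p))
    (h21x : ∀ p ∈ U, pdx F₂₁ p = F₂₂ p * pdx f p)
    (h22x : ∀ p ∈ U, pdx F₂₂ p = F₂₁ p * ((l : HQ) * pdx fs p))
    -- ∂_y F = F·[[0, λ·f★_y],[f_y, 0]]
    (h11y : ∀ p ∈ U, pdy F₁₁ p = F₁₂ p * pdy f p)
    (h12y : ∀ p ∈ U, pdy F₁₂ p = F₁₁ p * ((l : HQ) * pdy fs p))
    (h21y : ∀ p ∈ U, pdy F₂₁ p = F₂₂ p * pdy f p)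
    (h22y : ∀ p ∈ U, pdy F₂₂ p = F₂₁ p * ((l : HQ) * pdy fs p)) :
    ∀ p ∈ U,
      (pdx (affQ F₁₁ F₂₁) p =
        (affQ F₁₂ F₂₂ p - affQ F₁₁ F₂₁ p) * F₂₂ p * pdx f p * (F₂₁ p)⁻¹) ∧
      (pdy (affQ F₁₁ F₂₁) p =
        (affQ F₁₂ F₂₂ p - affQ F₁₁ F₂₁ p) * F₂₂ p * pdy f p * (F₂₁ p)⁻¹) ∧
      (pdx (affQ F₁₂ F₂₂) p =
        (affQ F₁₁ F₂₁ p - affQ F₁₂ F₂₂ p) * F₂₁ p * ((l : HQ) * pdx fs p) * (F₂₂ p)⁻¹) ∧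
      (pdy (affQ F₁₂ F₂₂) p =
        (affQ F₁₁ F₂₁ p - affQ F₁₂ F₂₂ p) * F₂₁ p * ((l : HQ) * pdy fs p) * (F₂₂ p)⁻¹) ∧
      (affQ F₁₁ F₂₁ p ≠ affQ F₁₂ F₂₂ p →
        pdx (affQ F₁₁ F₂₁) p * (affQ F₁₁ F₂₁ p - affQ F₁₂ F₂₂ p)⁻¹ * pdy (affQ F₁₂ F₂₂) p =
        pdy (affQ F₁₁ F₂₁) p * (affQ F₁₁ F₂₁ p - affQ F₁₂ F₂₂ p)⁻¹ * pdx (affQ F₁₂ F₂₂) p) := by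
  intro p hp
  have diff : ∀ {h : ℝ × ℝ → HQ}, ContDiffOn ℝ ∞ h U → DifferentiableAt ℝ h p := fun hh =>
    (hh.contDiffAt (hU.mem_nhds hp)).differentiableAt (by simp)
  have b0 := hinv₂₁ p hp
  have d0 := hinv₂₂ p hp
  have gx : pdx (affQ F₁₁ F₂₁) p = _ :=
    fderiv_affQ (diff hF₁₁) (diff hF₂₁) b0 d0 (h11x p hp) (h21x p hp)
  have gy : pdy (affQ F₁₁ F₂₁) p = _ :=
    fderiv_affQ (diff hF₁₁) (diff hF₂₁) b0 d0 (h11y p hp) (h21y p hp)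
  have ghx : pdx (affQ F₁₂ F₂₂) p = _ :=
    fderiv_affQ (diff hF₁₂) (diff hF₂₂) d0 b0 (h12x p hp) (h22x p hp)
  have ghy : pdy (affQ F₁₂ F₂₂) p = _ :=
    fderiv_affQ (diff hF₁₂) (diff hF₂₂) d0 b0 (h12y p hp) (h22y p hp)
  refine ⟨gx, gy, ghx, ghy, fun hne => ?_⟩
  rw [gx, gy, ghx, ghy, darboux_product l b0 hne, darboux_product l b0 hne, hC p hp]

end
end

section
/- (Permutability of Christoffel and Darboux transformations.) Let f, f★ : U → Im ℍ be smooth, λ ∈ ℝ with λ ≠ 0, and let g : U → ℍ be smooth with g(p) invertible for every p, satisfying the Riccati equations ∂_x g = g·λ·f★_x·g − f_x and ∂_y g = g·λ·f★_y·g − f_y on U. Then h := λ⁻¹·g⁻¹ satisfies the Riccati equations with the roles of f and f★ interchanged: ∂_x h = h·λ·f_x·h − f★_x and ∂_y h = h·λ·f_y·h − f★_y on U. (In other words, if f̂ = f + g is a λ-Darboux transform of f, then f★ + λ⁻¹(f̂ − f)⁻¹ is a λ-Darboux transform of f★, i.e. C D_λ f = D_λ C f.) -/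
/-!
Differentiating `h = l⁻¹ g⁻¹` gives `dh = -l⁻¹ g⁻¹ (dg) g⁻¹`. Substituting `dg = g (l dfs) g - df`
yields `dh = l⁻¹ g⁻¹ (df) g⁻¹ - dfs`, and since `l` is real, hence central, the first term is
`h (l df) h`. The computation is pointwise and linear in the direction (`fderiv_inv_riccati`); the
two claims are its instances in the directions `(1, 0)` and `(0, 1)`.
-/

/- STATEMENT 11 (Permutability of Christoffel and Darboux transformations): If g is a
pointwise-invertible solution of the Riccati equations ∂g = g·(λ df★)·g − df with
λ ≠ 0, then h := λ⁻¹·g⁻¹ solves the Riccati equations with the roles of f and f★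
interchanged: ∂h = h·(λ df)·h − df★.  (C D_λ f = D_λ C f.) -/

noncomputable section
open scoped ContDiff Quaternion

/-- Permutability in a single direction `v`. Here `a` and `b` are arbitrary quaternions, standing for
the derivatives of `f` and `fs` along `v`; passing from `g` to `l⁻¹ g⁻¹` makes them change places. -/
theorem fderiv_inv_riccati (g : ℝ × ℝ → HQ) (l : ℝ) (hl : l ≠ 0) (p v : ℝ × ℝ)
    (hg : DifferentiableAt ℝ g p) (hgp : g p ≠ 0) (a b : HQ)
    (h : fderiv ℝ g p v = g p * ((l : HQ) * b) * g p - a) :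
    fderiv ℝ (fun q => (l : HQ)⁻¹ * (g q)⁻¹) p v =
      ((l : HQ)⁻¹ * (g p)⁻¹) * ((l : HQ) * a) * ((l : HQ)⁻¹ * (g p)⁻¹) - b := by
  have hl' : (l : HQ) ≠ 0 := by
    intro h0
    exact hl (by simpa using congrArg QuaternionAlgebra.re h0)
  have hd : HasFDerivAt (fun q => (l : HQ)⁻¹ * (g q)⁻¹) _ p :=
    ((hasFDerivAt_inv' (𝕜 := ℝ) hgp).comp p hg.hasFDerivAt).const_mul ((l : HQ)⁻¹)
  rw [hd.fderiv]
  -- The real scalar `l` is central, so it can be moved next to `l⁻¹` and cancelled.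
  have c : ∀ x : HQ, (l : HQ) * x = x * (l : HQ) := fun x => Quaternion.coe_commutes l x
  have e1 : (g p)⁻¹ * (g p * ((l : HQ) * b) * g p - a) * (g p)⁻¹
      = (l : HQ) * b - (g p)⁻¹ * a * (g p)⁻¹ := by
    rw [mul_sub, sub_mul, mul_assoc (g p), inv_mul_cancel_left₀ hgp,
      mul_inv_cancel_right₀ hgp]
  have e2 : ((l : HQ)⁻¹ * (g p)⁻¹) * ((l : HQ) * a) * ((l : HQ)⁻¹ * (g p)⁻¹)
      = (l : HQ)⁻¹ * ((g p)⁻¹ * a * (g p)⁻¹) := by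
    rw [c a]
    simp only [mul_assoc]
    rw [mul_inv_cancel_left₀ hl']
  simp [h]
  rw [e1, e2, mul_sub, inv_mul_cancel_left₀ hl']
  abel

theorem christoffel_darboux_permutability
    (U : Set (ℝ × ℝ)) (hU : IsOpen U) (f fs g : ℝ × ℝ → HQ) (l : ℝ) (hl : l ≠ 0)
    (hf : ContDiffOn ℝ ∞ f U) (hfs : ContDiffOn ℝ ∞ fs U)
    (hfIm : ∀ p ∈ U, (f p).re = 0) (hfsIm : ∀ p ∈ U, (fs p).re = 0)
    (hg : ContDiffOn ℝ ∞ g U) (hginv : ∀ p ∈ U, g p ≠ 0)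
    (hRx : ∀ p ∈ U, pdx g p = g p * ((l : HQ) * pdx fs p) * g p - pdx f p)
    (hRy : ∀ p ∈ U, pdy g p = g p * ((l : HQ) * pdy fs p) * g p - pdy f p) :
    ∀ p ∈ U,
      pdx (fun q => (l : HQ)⁻¹ * (g q)⁻¹) p =
        ((l : HQ)⁻¹ * (g p)⁻¹) * ((l : HQ) * pdx f p) * ((l : HQ)⁻¹ * (g p)⁻¹) -
          pdx fs p ∧
      pdy (fun q => (l : HQ)⁻¹ * (g q)⁻¹) p =
        ((l : HQ)⁻¹ * (g p)⁻¹) * ((l : HQ) * pdy f p) * ((l : HQ)⁻¹ * (g p)⁻¹) -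
          pdy fs p := by
  intro p hp
  have hd : DifferentiableAt ℝ g p :=
    (hg.contDiffAt (hU.mem_nhds hp)).differentiableAt (by simp)
  exact ⟨fderiv_inv_riccati g l hl p _ hd (hginv p hp) _ _ (hRx p hp),
    fderiv_inv_riccati g l hl p _ hd (hginv p hp) _ _ (hRy p hp)⟩

end
end

section
/- (Gauss and Codazzi equations for the Ribaucour frame of an isothermic surface.) Let u, H, Ĥ, λ, μ : U → ℝ be smooth and define A, B : U → M₂(ℍ) by A₁₁ = A₂₂ = −(u_y/2)·i − ((H·e^u + Ĥ·e^{−u})/2)·k, A₁₂ = (μ·e^u − λ·e^{−u})·j, A₂₁ = e^u·j, and B₁₁ = B₂₂ = (u_x/2)·i + ((H·e^u − Ĥ·e^{−u})/2)·j, B₁₂ = (μ·e^u + λ·e^{−u})·k, B₂₁ = e^u·k. Then the flatness (Maurer–Cartan) equation ∂_x B − ∂_y A + A·B − B·A = 0 holds on U if and only if all of the following hold on U: (Gauss) u_xx + u_yy = −H²·e^{2u} + Ĥ²·e^{−2u} − 4·e^{2u}·μ; (Codazzi) e^u·H_x = e^{−u}·Ĥ_x, e^u·H_y = −e^{−u}·Ĥ_y,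 e^u·μ_x + e^{−u}·λ_x = 0, and e^u·μ_y − e^{−u}·λ_y = 0. -/
/- STATEMENT 12 (Gauss and Codazzi equations for the Ribaucour frame of an isothermic
surface): For smooth u, H, Ĥ, λ, μ : U → ℝ, the connection form Φ = A dx + B dy with
A₁₁ = A₂₂ = −(u_y/2)i − ((He^u + Ĥe^{−u})/2)k, A₁₂ = (μe^u − λe^{−u})j, A₂₁ = e^u j,
B₁₁ = B₂₂ = (u_x/2)i + ((He^u − Ĥe^{−u})/2)j, B₁₂ = (μe^u + λe^{−u})k, B₂₁ = e^u k,
is flat (∂_x B − ∂_y A + [A,B] = 0) on U iff the Gauss equation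
Δu = −H²e^{2u} + Ĥ²e^{−2u} − 4e^{2u}μ and the Codazzi equations
e^u H_x = e^{−u} Ĥ_x, e^u H_y = −e^{−u} Ĥ_y, e^u μ_x + e^{−u} λ_x = 0,
e^u μ_y − e^{−u} λ_y = 0 hold on U. -/

/-!
The equivalence holds pointwise, by comparing quaternionic components of the flatness equation.
Put `P = (H e^u + Ĥ e^{-u})/2`, `Q = (H e^u - Ĥ e^{-u})/2`, `M = μ e^u + λ e^{-u}` and
`N = μ e^u - λ e^{-u}`.

* The two diagonal entries coincide, with `i`-component
  `(u_xx + u_yy)/2 + 2 P Q + 2 μ e^{2u}`, `j`-component `Q_x - u_x P` and `k`-component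
  `P_y - u_y Q`. Since `2 P Q = (H² e^{2u} - Ĥ² e^{-2u})/2`, the first is the Gauss equation; the
  other two equal `(e^u H_x - e^{-u} Ĥ_x)/2` and `(e^u H_y + e^{-u} Ĥ_y)/2`.
* The upper right entry has `j`-component `-N_y + u_y M = -(e^u μ_y - e^{-u} λ_y)` and
  `k`-component `M_x - u_x N = e^u μ_x + e^{-u} λ_x`.
* The lower left entry and all remaining components vanish identically.

Smoothness on the open set `U` is used only to differentiate the entries by the product and chain
rules (`fderiv_imag_quaternion`).
-/

noncomputable section
open scoped ContDiff Quaternion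

def qi : HQ := ⟨0, 1, 0, 0⟩
def qj : HQ := ⟨0, 0, 1, 0⟩
def qk : HQ := ⟨0, 0, 0, 1⟩

/-- The dx-component of the Ribaucour connection form (4.1). -/
noncomputable def ribA (u H Hh lam mu : ℝ × ℝ → ℝ) (p : ℝ × ℝ) :
    Matrix (Fin 2) (Fin 2) HQ :=
  !![-(pdy u p / 2) • qi -
       ((H p * Real.exp (u p) + Hh p * Real.exp (-u p)) / 2) • qk,
     (mu p * Real.exp (u p) - lam p * Real.exp (-u p)) • qj;
     Real.exp (u p) • qj,
     -(pdy u p / 2) • qi -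
       ((H p * Real.exp (u p) + Hh p * Real.exp (-u p)) / 2) • qk]

/-- The dy-component of the Ribaucour connection form (4.1). -/
noncomputable def ribB (u H Hh lam mu : ℝ × ℝ → ℝ) (p : ℝ × ℝ) :
    Matrix (Fin 2) (Fin 2) HQ :=
  !![(pdx u p / 2) • qi +
       ((H p * Real.exp (u p) - Hh p * Real.exp (-u p)) / 2) • qj,
     (mu p * Real.exp (u p) + lam p * Real.exp (-u p)) • qk;
     Real.exp (u p) • qk,
     (pdx u p / 2) • qi +
       ((H p * Real.exp (u p) - Hh p * Real.exp (-u p)) / 2) • qj]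

lemma qi_components : qi.re = 0 ∧ qi.imI = 1 ∧ qi.imJ = 0 ∧ qi.imK = 0 := ⟨rfl, rfl, rfl, rfl⟩

lemma qj_components : qj.re = 0 ∧ qj.imI = 0 ∧ qj.imJ = 1 ∧ qj.imK = 0 := ⟨rfl, rfl, rfl, rfl⟩

lemma qk_components : qk.re = 0 ∧ qk.imI = 0 ∧ qk.imJ = 0 ∧ qk.imK = 1 := ⟨rfl, rfl, rfl, rfl⟩

/-- Reduces the derivative of an entry of the connection form, which is always imaginary, to the
derivatives of its real coefficients; `F` is kept abstract so that it can be a matrix entry. -/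
lemma fderiv_imag_quaternion {f g h : ℝ × ℝ → ℝ} {f' g' h' : ℝ × ℝ →L[ℝ] ℝ} {p : ℝ × ℝ}
    (hf : HasFDerivAt f f' p) (hg : HasFDerivAt g g' p) (hh : HasFDerivAt h h' p)
    (v : ℝ × ℝ) {F : ℝ × ℝ → HQ} (hF : ∀ q, F q = f q • qi + g q • qj + h q • qk) :
    fderiv ℝ F p v = f' v • qi + g' v • qj + h' v • qk := by
  rw [funext hF, (((hf.smul_const qi).fun_add (hg.smul_const qj)).fun_add (hh.smul_const qk)).fderiv]
  simp

theorem ribaucour_flatness_iff_gauss_codazzi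
    (U : Set (ℝ × ℝ)) (hU : IsOpen U) (u H Hh lam mu : ℝ × ℝ → ℝ)
    (hu : ContDiffOn ℝ ∞ u U) (hH : ContDiffOn ℝ ∞ H U)
    (hHh : ContDiffOn ℝ ∞ Hh U) (hlam : ContDiffOn ℝ ∞ lam U)
    (hmu : ContDiffOn ℝ ∞ mu U) :
    (∀ p ∈ U, ∀ i j : Fin 2,
        pdx (fun q => ribB u H Hh lam mu q i j) p -
          pdy (fun q => ribA u H Hh lam mu q i j) p +
          (ribA u H Hh lam mu p * ribB u H Hh lam mu p -
            ribB u H Hh lam mu p * ribA u H Hh lam mu p) i j = 0) ↔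
    (∀ p ∈ U,
      -- Gauss
      pdx (fun q => pdx u q) p + pdy (fun q => pdy u q) p =
        -(H p) ^ 2 * Real.exp (2 * u p) + (Hh p) ^ 2 * Real.exp (-(2 * u p)) -
          4 * Real.exp (2 * u p) * mu p ∧
      -- Codazzi
      Real.exp (u p) * pdx H p = Real.exp (-u p) * pdx Hh p ∧
      Real.exp (u p) * pdy H p = -(Real.exp (-u p) * pdy Hh p) ∧
      Real.exp (u p) * pdx mu p + Real.exp (-u p) * pdx lam p = 0 ∧
      Real.exp (u p) * pdy mu p - Real.exp (-u p) * pdy lam p = 0) := by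
  refine forall₂_congr fun p hp => ?_
  have hn : U ∈ nhds p := hU.mem_nhds hp
  have smooth_diff : ∀ {f : ℝ × ℝ → ℝ}, ContDiffOn ℝ ∞ f U → HasFDerivAt f (fderiv ℝ f p) p :=
    fun hf => ((hf.contDiffAt hn).differentiableAt (by simp)).hasFDerivAt
  have du := smooth_diff hu
  have dH := smooth_diff hH
  have dHh := smooth_diff hHh
  have dlam := smooth_diff hlam
  have dmu := smooth_diff hmu
  have hfd : DifferentiableAt ℝ (fderiv ℝ u) p :=
    ((hu.contDiffAt hn).fderiv_right (m := 1) (by norm_cast)).differentiableAt (by simp)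
  have dux : HasFDerivAt (pdx u) (fderiv ℝ (pdx u) p) p :=
    DifferentiableAt.hasFDerivAt (hfd.clm_apply (differentiableAt_const _))
  have duy : HasFDerivAt (pdy u) (fderiv ℝ (pdy u) p) p :=
    DifferentiableAt.hasFDerivAt (hfd.clm_apply (differentiableAt_const _))
  have d0 : HasFDerivAt (fun _ : ℝ × ℝ => (0 : ℝ)) (0 : ℝ × ℝ →L[ℝ] ℝ) p := hasFDerivAt_const _ _
  have dE := du.exp
  have dE' := du.fun_neg.exp
  have dP := ((dH.fun_mul dE).fun_add (dHh.fun_mul dE')).mul_const (2⁻¹ : ℝ)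
  have dQ := ((dH.fun_mul dE).fun_sub (dHh.fun_mul dE')).mul_const (2⁻¹ : ℝ)
  have dM := (dmu.fun_mul dE).fun_add (dlam.fun_mul dE')
  have dN := (dmu.fun_mul dE).fun_sub (dlam.fun_mul dE')
  have hBd := fderiv_imag_quaternion (dux.mul_const (2⁻¹ : ℝ)) dQ d0 (1, 0)
    (F := fun q => ribB u H Hh lam mu q 0 0) (fun q => by simp [ribB, div_eq_mul_inv])
  have hAd := fderiv_imag_quaternion (duy.mul_const (2⁻¹ : ℝ)).fun_neg d0 dP.fun_neg (0, 1)
    (F := fun q => ribA u H Hh lam mu q 0 0)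
    (fun q => by simp [ribA, div_eq_mul_inv, sub_eq_add_neg])
  have hBd' : fderiv ℝ (fun q => ribB u H Hh lam mu q 1 1) p (1, 0) = _ := hBd
  have hAd' : fderiv ℝ (fun q => ribA u H Hh lam mu q 1 1) p (0, 1) = _ := hAd
  have hBu := fderiv_imag_quaternion d0 d0 dM (1, 0)
    (F := fun q => ribB u H Hh lam mu q 0 1) (fun q => by simp [ribB])
  have hAu := fderiv_imag_quaternion d0 dN d0 (0, 1)
    (F := fun q => ribA u H Hh lam mu q 0 1) (fun q => by simp [ribA])
  have hBl := fderiv_imag_quaternion d0 d0 dE (1, 0)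
    (F := fun q => ribB u H Hh lam mu q 1 0) (fun q => by simp [ribB])
  have hAl := fderiv_imag_quaternion d0 dE d0 (0, 1)
    (F := fun q => ribA u H Hh lam mu q 1 0) (fun q => by simp [ribA])
  have e2 : Real.exp (2 * u p) = Real.exp (u p) ^ 2 := by
    rw [← Real.exp_nat_mul]; norm_num
  have e2' : Real.exp (-(2 * u p)) = Real.exp (-u p) ^ 2 := by
    rw [← Real.exp_nat_mul]; congr 1; push_cast; ring
  have exx : pdx (fun q => pdx u q) p = fderiv ℝ (pdx u) p (1, 0) := rfl
  have eyy : pdy (fun q => pdy u q) p = fderiv ℝ (pdy u) p (0, 1) := rfl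
  rw [exx, eyy]
  simp only [Fin.forall_fin_two]
  simp only [pdx, pdy] at hBd hAd hBd' hAd' hBu hAu hBl hAl ⊢
  rw [hBd, hAd, hBd', hAd', hBu, hAu, hBl, hAl, e2, e2']
  simp only [Quaternion.ext_iff, ribA, ribB, Matrix.mul_apply, qi_components, qj_components,
    qk_components, pdx, pdy, Fin.sum_univ_two, Matrix.sub_apply, Matrix.of_apply,
    Matrix.cons_val', Matrix.cons_val_zero, Matrix.cons_val_one, Matrix.cons_val_fin_one,
    Quaternion.re_add, Quaternion.imI_add, Quaternion.imJ_add, Quaternion.imK_add,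
    Quaternion.re_sub, Quaternion.imI_sub, Quaternion.imJ_sub, Quaternion.imK_sub,
    Quaternion.re_mul, Quaternion.imI_mul, Quaternion.imJ_mul, Quaternion.imK_mul,
    Quaternion.re_smul, Quaternion.imI_smul, Quaternion.imJ_smul, Quaternion.imK_smul,
    Quaternion.re_zero, Quaternion.imI_zero, Quaternion.imJ_zero, Quaternion.imK_zero,
    add_apply, sub_apply, neg_apply,
    smul_apply, zero_apply, smul_eq_mul,
    mul_zero, zero_mul, mul_one, add_zero, zero_add, sub_zero, zero_sub, sub_self,
    true_and]
  -- Every component is a linear combination of the five equations with rational coefficients: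
  -- the derivatives of the exponentials cancel against commutator terms.
  constructor
  · rintro ⟨⟨⟨-, hi, hj, hk⟩, -, hj', hk'⟩, -⟩
    refine ⟨?_, ?_, ?_, ?_, ?_⟩
    · linear_combination 2 * hi
    · linear_combination 2 * hj
    · linear_combination 2 * hk
    · linear_combination hk'
    · linear_combination -hj'
  · rintro ⟨hG, hHx, hHy, hmx, hmy⟩
    refine ⟨⟨⟨?_, ?_, ?_, ?_⟩, ?_, ?_, ?_⟩, ⟨?_, ?_, ?_⟩, ?_, ?_, ?_, ?_⟩
    · ring
    · linear_combination hG / 2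
    · linear_combination hHx / 2
    · linear_combination hHy / 2
    · ring
    · linear_combination -hmy
    · linear_combination hmx
    · ring
    · ring
    · ring
    · ring
    · linear_combination hG / 2
    · linear_combination hHx / 2
    · linear_combination hHy / 2

end
end

section
/- (The Liouville equation characterizes flatness of the cmc spectral family.) Let u : U → ℝ be smooth and, for λ ∈ ℝ, define A_λ, B_λ : U → M₂(ℍ) by A_λ = [[−(u_y/2)·i − (e^{−u}/2)·k, −λ·e^{−u}·j],[e^u·j, −(u_y/2)·i − (e^{−u}/2)·k]] and B_λ = [[(u_x/2)·i − (e^{−u}/2)·j, λ·e^{−u}·k],[e^u·k, (u_x/2)·i − (e^{−u}/2)·j]]. Then for every λ ∈ ℝ the flatness equation ∂_x B_λ − ∂_y A_λ + A_λ·B_λ − B_λ·A_λ = 0 holds on U if and only if u satisfies the Liouville equation u_xx + u_yy = e^{−2u} on U. In particular flatness for one value of λ implies flatness for all λ ∈ ℝ simultaneously (the spectral family of a cmc-1 surface in hyperbolic space). -/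
/-! The flatness defect is computed entry by entry. Derivatives of real multiples of the constant
quaternions `qi`, `qj`, `qk` reduce to derivatives of the real coefficients, after which everything
is quaternion arithmetic. The off-diagonal entries of the defect vanish identically, the
`λ`-contributions to the diagonal entries cancel, and both diagonal entries equal
`((u_xx + u_yy - e^{-2u}) / 2) i`. Hence flatness for any `λ` is the Liouville equation. -/

/- STATEMENT 13 (The Liouville equation characterizes flatness of the cmc spectral
family): For smooth u : U → ℝ and λ ∈ ℝ, the connection form Φ_λ = A_λ dx + B_λ dy
with A_λ = [[−(u_y/2)i − (e^{−u}/2)k, −λe^{−u}j],[e^u j, −(u_y/2)i − (e^{−u}/2)k]] and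
B_λ = [[(u_x/2)i − (e^{−u}/2)j, λe^{−u}k],[e^u k, (u_x/2)i − (e^{−u}/2)j]] is flat on U
if and only if u satisfies the Liouville equation Δu = e^{−2u} on U — for every λ ∈ ℝ,
so flatness for one λ implies flatness for all λ. -/

noncomputable section
open scoped ContDiff Quaternion

/-- The dx-component A_λ of the cmc spectral connection form. -/
noncomputable def cmcA (u : ℝ × ℝ → ℝ) (lam : ℝ) (p : ℝ × ℝ) :
    Matrix (Fin 2) (Fin 2) HQ :=
  !![-(pdy u p / 2) • qi - (Real.exp (-u p) / 2) • qk,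
     -(lam * Real.exp (-u p)) • qj;
     Real.exp (u p) • qj,
     -(pdy u p / 2) • qi - (Real.exp (-u p) / 2) • qk]

/-- The dy-component B_λ of the cmc spectral connection form. -/
noncomputable def cmcB (u : ℝ × ℝ → ℝ) (lam : ℝ) (p : ℝ × ℝ) :
    Matrix (Fin 2) (Fin 2) HQ :=
  !![(pdx u p / 2) • qi - (Real.exp (-u p) / 2) • qj,
     (lam * Real.exp (-u p)) • qk;
     Real.exp (u p) • qk,
     (pdx u p / 2) • qi - (Real.exp (-u p) / 2) • qj]

@[simp] lemma qi_re : qi.re = 0 := rfl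
@[simp] lemma qi_imI : qi.imI = 1 := rfl
@[simp] lemma qi_imJ : qi.imJ = 0 := rfl
@[simp] lemma qi_imK : qi.imK = 0 := rfl
@[simp] lemma qj_re : qj.re = 0 := rfl
@[simp] lemma qj_imI : qj.imI = 0 := rfl
@[simp] lemma qj_imJ : qj.imJ = 1 := rfl
@[simp] lemma qj_imK : qj.imK = 0 := rfl
@[simp] lemma qk_re : qk.re = 0 := rfl
@[simp] lemma qk_imI : qk.imI = 0 := rfl
@[simp] lemma qk_imJ : qk.imJ = 0 := rfl
@[simp] lemma qk_imK : qk.imK = 1 := rfl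

/-- Directional derivative of a combination `f q • a - g q • b` with constant vectors `a`, `b`. -/
lemma fderiv_smul_sub_smul {f g : ℝ × ℝ → ℝ} {p : ℝ × ℝ} (hf : DifferentiableAt ℝ f p)
    (hg : DifferentiableAt ℝ g p) (a b : HQ) (v : ℝ × ℝ) :
    fderiv ℝ (fun q => f q • a - g q • b) p v = fderiv ℝ f p v • a - fderiv ℝ g p v • b := by
  rw [((hf.hasFDerivAt.smul_const a).fun_sub (hg.hasFDerivAt.smul_const b)).fderiv]
  simp

lemma fderiv_smul_quat {f : ℝ × ℝ → ℝ} {p : ℝ × ℝ} (hf : DifferentiableAt ℝ f p)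
    (a : HQ) (v : ℝ × ℝ) :
    fderiv ℝ (fun q => f q • a) p v = fderiv ℝ f p v • a := by
  rw [(hf.hasFDerivAt.smul_const a).fderiv]
  simp

/-- The flatness defect of the spectral connection at a point of second-order differentiability:
it is the scalar matrix with diagonal entry `((u_xx + u_yy - e^{-2u}) / 2) i`, for every `λ`. -/
lemma cmc_defect_eq {u : ℝ × ℝ → ℝ} {p : ℝ × ℝ} (lam : ℝ) (h : DifferentiableAt ℝ u p)
    (hx : DifferentiableAt ℝ (pdx u) p) (hy : DifferentiableAt ℝ (pdy u) p) (i j : Fin 2) :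
    pdx (fun q => cmcB u lam q i j) p - pdy (fun q => cmcA u lam q i j) p +
        (cmcA u lam p * cmcB u lam p - cmcB u lam p * cmcA u lam p) i j =
      if i = j then
        ((pdx (pdx u) p + pdy (pdy u) p - Real.exp (-(2 * u p))) / 2) • qi
      else 0 := by
  have hE : HasFDerivAt (fun q => Real.exp (-u q)) (Real.exp (-u p) • -fderiv ℝ u p) p :=
    h.hasFDerivAt.fun_neg.exp
  have hE2 : HasFDerivAt (fun q => Real.exp (-u q) / 2)
      ((2⁻¹ : ℝ) • (Real.exp (-u p) • -fderiv ℝ u p)) p := by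
    simpa only [div_eq_inv_mul] using hE.const_mul (2⁻¹ : ℝ)
  have hP : HasFDerivAt (fun q => Real.exp (u q)) (Real.exp (u p) • fderiv ℝ u p) p :=
    h.hasFDerivAt.exp
  have hX : HasFDerivAt (fun q => pdx u q / 2) ((2⁻¹ : ℝ) • fderiv ℝ (pdx u) p) p := by
    simpa only [div_eq_inv_mul] using hx.hasFDerivAt.const_mul (2⁻¹ : ℝ)
  have hY : HasFDerivAt (fun q => -(pdy u q / 2)) (-((2⁻¹ : ℝ) • fderiv ℝ (pdy u) p)) p := by
    simpa only [div_eq_inv_mul] using (hy.hasFDerivAt.const_mul (2⁻¹ : ℝ)).fun_neg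
  have hL := hE.const_mul lam
  have e2 : Real.exp (-(2 * u p)) = Real.exp (-u p) * Real.exp (-u p) := by
    rw [← Real.exp_add]; ring_nf
  -- Derivatives of the entries of `B` in direction `x` and of `A` in direction `y`.
  have dB : fderiv ℝ (fun q => (pdx u q / 2) • qi - (Real.exp (-u q) / 2) • qj) p (1, 0) = _ :=
    fderiv_smul_sub_smul hX.differentiableAt hE2.differentiableAt qi qj (1, 0)
  have dA : fderiv ℝ (fun q => -(pdy u q / 2) • qi - (Real.exp (-u q) / 2) • qk) p (0, 1) = _ :=
    fderiv_smul_sub_smul hY.differentiableAt hE2.differentiableAt qi qk (0, 1)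
  have dB12 : fderiv ℝ (fun q => (lam * Real.exp (-u q)) • qk) p (1, 0) = _ :=
    fderiv_smul_quat hL.differentiableAt qk (1, 0)
  have dA12 : fderiv ℝ (fun q => -(lam * Real.exp (-u q)) • qj) p (0, 1) = _ :=
    fderiv_smul_quat hL.fun_neg.differentiableAt qj (0, 1)
  have dB21 : fderiv ℝ (fun q => Real.exp (u q) • qk) p (1, 0) = _ :=
    fderiv_smul_quat hP.differentiableAt qk (1, 0)
  have dA21 : fderiv ℝ (fun q => Real.exp (u q) • qj) p (0, 1) = _ :=
    fderiv_smul_quat hP.differentiableAt qj (0, 1)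
  rw [hX.fderiv, hE2.fderiv] at dB
  rw [hY.fderiv, hE2.fderiv] at dA
  rw [hL.fderiv] at dB12
  rw [hL.fun_neg.fderiv] at dA12
  rw [hP.fderiv] at dB21 dA21
  rw [e2]
  fin_cases i <;> fin_cases j <;>
    simp [cmcA, cmcB] <;>
    simp only [pdx, pdy, neg_smul] at dB dA dB12 dA12 dB21 dA21 ⊢ <;>
    simp only [dB, dA, dB12, dA12, dB21, dA21] <;>
    ext <;> simp <;> ring

theorem liouville_iff_cmc_spectral_family_flat
    (U : Set (ℝ × ℝ)) (hU : IsOpen U) (u : ℝ × ℝ → ℝ)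
    (hu : ContDiffOn ℝ ∞ u U) :
    ∀ lam : ℝ,
      (∀ p ∈ U, ∀ i j : Fin 2,
          pdx (fun q => cmcB u lam q i j) p - pdy (fun q => cmcA u lam q i j) p +
            (cmcA u lam p * cmcB u lam p - cmcB u lam p * cmcA u lam p) i j = 0) ↔
      (∀ p ∈ U,
        pdx (fun q => pdx u q) p + pdy (fun q => pdy u q) p =
          Real.exp (-(2 * u p))) := by
  intro lam
  refine forall₂_congr fun p hp => ?_
  have hcd : ContDiffAt ℝ ∞ u p := hu.contDiffAt (hU.mem_nhds hp)
  have hd : DifferentiableAt ℝ (fderiv ℝ u) p :=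
    (hcd.fderiv_right (m := 1) (by norm_cast)).differentiableAt one_ne_zero
  have h := hcd.differentiableAt (by simp)
  have hx : DifferentiableAt ℝ (pdx u) p := hd.clm_apply (differentiableAt_const _)
  have hy : DifferentiableAt ℝ (pdy u) p := hd.clm_apply (differentiableAt_const _)
  simp only [cmc_defect_eq lam h hx hy]
  constructor
  · intro H
    have H0 := congrArg QuaternionAlgebra.imI (H 0 0)
    simp at H0
    linarith
  · intro H i j
    rw [show pdx (pdx u) p + pdy (pdy u) p = _ from H]
    simp

end
end

section
/- (Explicit integration of the spectral family of the plane — the catenoid cousins.) Let λ > 0 and for (x,y) ∈ ℝ² set w := √λ·(x + y·i) ∈ ℂ ⊂ ℍ. Define F : ℝ² → M₂(ℍ) by F₁₁ := cosh(w), F₁₂ := √λ·sinh(w)·j, F₂₁ := −(1/√λ)·j·sinh(w), F₂₂ := cosh(w̄) where w̄ = √λ·(x − y·i). Then F(0,0) is the identity matrix and F satisfies ∂_x F = F·A and ∂_y F = F·B on ℝ², where A := [[0, λ·j],[−j, 0]] and B := [[0, λ·k],[k, 0]]. (A dx + B dy is the connection form Φ_λ = [[0, λ dCf],[df, 0]]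 of the Christoffel pair f(z) = −j·z, Cf(z) = z·j; the affine projection F₁₁·F₂₁⁻¹ of the first column gives the T_λ-transform of the plane, whose Christoffel transforms are the catenoid cousins.) -/
/-!
Every entry of the frame has the form `L (g w)`, where `w = √λ (x + c y)` with `c = ± i`, `g` is
`cosh` or `sinh`, and `L : ℂ → ℍ` is the real-linear map `z ↦ a z b` for fixed quaternions `a`, `b`.
By the chain rule its derivative in direction `v` is `L (g'(w) √λ (v₁ + c v₂))` (`fderiv_entry`).
With this, the two differential equations reduce entry by entry to identities in `ℍ` that follow
from `√λ ^ 2 = λ`, from `j z = z̄ j`, and from `cosh w̄` and `sinh w̄` being the conjugates of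
`cosh w` and `sinh w`.
-/

/- STATEMENT 17 (Explicit integration of the spectral family of the plane — the
catenoid cousins): For λ > 0 and w = √λ(x + yi), the frame
F = [[cosh w, √λ sinh(w)j],[−(1/√λ)j sinh w, cosh w̄]] satisfies F(0,0) = 1,
∂_x F = F·A, ∂_y F = F·B with A = [[0, λj],[−j, 0]], B = [[0, λk],[k, 0]]
(the connection form Φ_λ of the Christoffel pair f(z) = −jz, Cf(z) = zj). -/

noncomputable section
open scoped ContDiff Quaternion

/-- The embedding ℂ ⊂ ℍ as the real span of 1 and i. -/
def cq (z : ℂ) : HQ := ⟨z.re, z.im, 0, 0⟩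

/-- The explicit spectral frame of the plane. -/
noncomputable def catFrame (lam : ℝ) (p : ℝ × ℝ) : Matrix (Fin 2) (Fin 2) HQ :=
  !![cq (Complex.cosh ((Real.sqrt lam : ℂ) * (p.1 + p.2 * Complex.I))),
     (Real.sqrt lam : HQ) *
       cq (Complex.sinh ((Real.sqrt lam : ℂ) * (p.1 + p.2 * Complex.I))) * qj;
     -((Real.sqrt lam : HQ)⁻¹ * (qj *
       cq (Complex.sinh ((Real.sqrt lam : ℂ) * (p.1 + p.2 * Complex.I))))),
     cq (Complex.cosh ((Real.sqrt lam : ℂ) * (p.1 - p.2 * Complex.I)))]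

@[simp] lemma cq_re (z : ℂ) : (cq z).re = z.re := rfl
@[simp] lemma cq_imI (z : ℂ) : (cq z).imI = z.im := rfl
@[simp] lemma cq_imJ (z : ℂ) : (cq z).imJ = 0 := rfl
@[simp] lemma cq_imK (z : ℂ) : (cq z).imK = 0 := rfl
/-- The real-linear map `ℂ → ℍ`, `z ↦ a z b`, with `ℂ` embedded by `cq`. -/
def sandwich (a b : HQ) : ℂ →ₗ[ℝ] HQ where
  toFun z := a * cq z * b
  map_add' z w := by
    have h : cq (z + w) = cq z + cq w := by ext <;> simp
    rw [h, mul_add, add_mul]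
  map_smul' r z := by
    have h : cq (r • z) = r • cq z := by ext <;> simp
    rw [h, mul_smul_comm, smul_mul_assoc, RingHom.id_apply]

/-- Chain rule for the frame entries: the inner function is the affine substitution
`(x, y) ↦ s (x + c y)`, the outer one an arbitrary real-linear map. -/
lemma fderiv_entry (L : ℂ →ₗ[ℝ] HQ) (g g' : ℂ → ℂ) (hg : ∀ z, HasDerivAt g (g' z) z)
    (s c : ℂ) (p v : ℝ × ℝ) :
    fderiv ℝ (fun q : ℝ × ℝ => L (g (s * (q.1 + q.2 * c)))) p v =
      L (g' (s * (p.1 + p.2 * c)) * (s * (v.1 + v.2 * c))) := by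
  have h1 : HasFDerivAt (fun q : ℝ × ℝ => (q.1 : ℂ))
      (Complex.ofRealCLM.comp (ContinuousLinearMap.fst ℝ ℝ ℝ)) p :=
    (Complex.ofRealCLM.comp (ContinuousLinearMap.fst ℝ ℝ ℝ)).hasFDerivAt
  have h2 : HasFDerivAt (fun q : ℝ × ℝ => (q.2 : ℂ))
      (Complex.ofRealCLM.comp (ContinuousLinearMap.snd ℝ ℝ ℝ)) p :=
    (Complex.ofRealCLM.comp (ContinuousLinearMap.snd ℝ ℝ ℝ)).hasFDerivAt
  have hw := (h1.add (h2.mul_const c)).const_mul s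
  have hgw := ((hg (s * (p.1 + p.2 * c))).hasFDerivAt.restrictScalars ℝ).comp p hw
  have hL := (LinearMap.toContinuousLinearMap L).hasFDerivAt.comp p hgw
  have key := congrArg (fun T => T v) hL.fderiv
  refine key.trans ?_
  change L _ = L _
  congr 1
  simp
  ring

lemma cosh_conj_arg (s x y : ℝ) :
    Complex.cosh ((s : ℂ) * (x - y * Complex.I)) =
      (starRingEnd ℂ) (Complex.cosh ((s : ℂ) * (x + y * Complex.I))) := by
  rw [← Complex.cosh_conj]
  simp [sub_eq_add_neg]

lemma sinh_conj_arg (s x y : ℝ) :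
    Complex.sinh ((s : ℂ) * (x - y * Complex.I)) =
      (starRingEnd ℂ) (Complex.sinh ((s : ℂ) * (x + y * Complex.I))) := by
  rw [← Complex.sinh_conj]
  simp [sub_eq_add_neg]

theorem catenoid_cousin_frame (lam : ℝ) (hlam : 0 < lam) :
    catFrame lam (0, 0) = 1 ∧
    (∀ p : ℝ × ℝ, ∀ i j : Fin 2,
      pdx (fun q => catFrame lam q i j) p =
        (catFrame lam p * !![0, (lam : HQ) * qj; -qj, 0]) i j ∧
      pdy (fun q => catFrame lam q i j) p =
        (catFrame lam p * !![0, (lam : HQ) * qk; qk, 0]) i j) := by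
  have hs : Real.sqrt lam ≠ 0 := (Real.sqrt_pos.mpr hlam).ne'
  have hsq : Real.sqrt lam * Real.sqrt lam = lam := Real.mul_self_sqrt hlam.le
  refine ⟨?_, ?_⟩
  · have h0 : cq 0 = 0 := by ext <;> simp
    have h1 : cq 1 = 1 := by ext <;> simp
    simp [catFrame, h0, h1, Matrix.one_fin_two]
  intro p
  -- The four entries, differentiated in an arbitrary direction.
  have d11 (v : ℝ × ℝ) : fderiv ℝ (fun q => catFrame lam q 0 0) p v = _ :=
    Eq.trans (by congr 2; ext1 q; simp [catFrame, sandwich])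
      (fderiv_entry (sandwich 1 1) Complex.cosh Complex.sinh Complex.hasDerivAt_cosh
        (Real.sqrt lam) Complex.I p v)
  have d12 (v : ℝ × ℝ) : fderiv ℝ (fun q => catFrame lam q 0 1) p v = _ :=
    Eq.trans (by congr 2)
      (fderiv_entry (sandwich (Real.sqrt lam : HQ) qj) Complex.sinh Complex.cosh
        Complex.hasDerivAt_sinh (Real.sqrt lam) Complex.I p v)
  have d21 (v : ℝ × ℝ) : fderiv ℝ (fun q => catFrame lam q 1 0) p v = _ :=
    Eq.trans (by congr 2; ext1 q; simp [catFrame, sandwich, mul_assoc])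
      (fderiv_entry (sandwich (-((Real.sqrt lam : HQ)⁻¹ * qj)) 1) Complex.sinh Complex.cosh
        Complex.hasDerivAt_sinh (Real.sqrt lam) Complex.I p v)
  have d22 (v : ℝ × ℝ) : fderiv ℝ (fun q => catFrame lam q 1 1) p v = _ :=
    Eq.trans (by congr 2; ext1 q; simp [catFrame, sandwich, sub_eq_add_neg])
      (fderiv_entry (sandwich 1 1) Complex.cosh Complex.sinh Complex.hasDerivAt_cosh
        (Real.sqrt lam) (-Complex.I) p v)
  have hI : (p.1 : ℂ) + p.2 * -Complex.I = p.1 - p.2 * Complex.I := by ring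
  rw [hI, sinh_conj_arg] at d22
  have hinv : ((Real.sqrt lam : HQ))⁻¹ = (((Real.sqrt lam)⁻¹ : ℝ) : HQ) :=
    (Quaternion.coe_inv _).symm
  simp only [hinv] at d21
  have hF : catFrame lam p =
      !![cq (Complex.cosh ((Real.sqrt lam : ℂ) * (p.1 + p.2 * Complex.I))),
        (Real.sqrt lam : HQ) *
          cq (Complex.sinh ((Real.sqrt lam : ℂ) * (p.1 + p.2 * Complex.I))) * qj;
        -((((Real.sqrt lam)⁻¹ : ℝ) : HQ) * (qj *
          cq (Complex.sinh ((Real.sqrt lam : ℂ) * (p.1 + p.2 * Complex.I))))),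
        cq ((starRingEnd ℂ)
          (Complex.cosh ((Real.sqrt lam : ℂ) * (p.1 + p.2 * Complex.I))))] := by
    rw [catFrame, cosh_conj_arg, hinv]
  generalize Complex.cosh ((Real.sqrt lam : ℂ) * (p.1 + p.2 * Complex.I)) = C at *
  generalize Complex.sinh ((Real.sqrt lam : ℂ) * (p.1 + p.2 * Complex.I)) = S at *
  -- What is left is an identity in `ℍ` for each entry, valid for all `C S : ℂ`. The inverse
  -- `s⁻¹` has to stay inside the coercion `ℝ → ℍ`, so that its components are known: hence
  -- `Quaternion.coe_inv` is kept out of `simp`.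
  rw [Fin.forall_fin_two, Fin.forall_fin_two, Fin.forall_fin_two]
  simp only [pdx, pdy, d11, d12, d21, d22, hF]
  generalize Real.sqrt lam = s at hs hsq
  rw [← hsq]
  refine ⟨⟨⟨?_, ?_⟩, ?_, ?_⟩, ⟨?_, ?_⟩, ?_, ?_⟩ <;>
    simp [Matrix.mul_apply, Fin.sum_univ_two, -Quaternion.coe_inv] <;> ext <;>
    simp [sandwich, -Quaternion.coe_inv] <;> field_simp

end
end
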